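/- For all integers k ≥ 2 and s ≥ 1 there is a constant c(k,s) such that the following holds. Let P be a set of m points in ℝ² and let C be a set of n bounded-degree algebraic curves in ℝ² that have k degrees of freedom with multiplicity s. Then I(P,C) ≤ c(k,s)·(m^{k/(2k-1)}·n^{(2k-2)/(2k-1)} + m + n), where the constant also depends on the bound on the degree of the curves. -/

import Mathlib

attribute [local instance] Classical.propDecidable

noncomputable section

/-- The number of incidences between a finite set of points and a finite set of
curves (subsets of `ℝ^d`): the number of pairs `(p, γ)` with `p ∈ γ`. -/
def Incidences {d : ℕ} (P : Finset (Fin d → ℝ)) (C : Finset (Set (Fin d → ℝ))) : ℕ :=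
  ((P ×ˢ C).filter fun pc => pc.1 ∈ pc.2).card

/-- A line in `ℝ^d`. -/
def IsLine {d : ℕ} (ℓ : Set (Fin d → ℝ)) : Prop :=
  ∃ a b : Fin d → ℝ, b ≠ 0 ∧ ℓ = {x | ∃ t : ℝ, x = a + t • b}

/-- The real zero set of a polynomial in `d` variables. -/
def zeroSet {d : ℕ} (f : MvPolynomial (Fin d) ℝ) : Set (Fin d → ℝ) :=
  {x | MvPolynomial.eval x f = 0}

/-- A real algebraic set in `ℝ^d`. -/
def IsAlgSet {d : ℕ} (V : Set (Fin d → ℝ)) : Prop :=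
  ∃ S : Set (MvPolynomial (Fin d) ℝ),
    V = {x | ∀ f ∈ S, MvPolynomial.eval x f = 0}

/-- A real algebraic set in `ℝ^d` cut out by polynomials of degree at most `E`. -/
def IsAlgSetDeg {d : ℕ} (E : ℕ) (V : Set (Fin d → ℝ)) : Prop :=
  ∃ S : Set (MvPolynomial (Fin d) ℝ), (∀ f ∈ S, f.totalDegree ≤ E) ∧
    V = {x | ∀ f ∈ S, MvPolynomial.eval x f = 0}

/-- An irreducible real algebraic set: a nonempty algebraic set that is not the
union of two proper algebraic subsets. -/
def IsIrredAlgSet {d : ℕ} (V : Set (Fin d → ℝ)) : Prop :=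
  IsAlgSet V ∧ V.Nonempty ∧
    ∀ V₁ V₂ : Set (Fin d → ℝ), IsAlgSet V₁ → IsAlgSet V₂ → V = V₁ ∪ V₂ →
      V = V₁ ∨ V = V₂

/-- The real algebraic set `V` has dimension at least `j`: there is a strictly
increasing chain of `j+1` irreducible algebraic sets contained in `V`. -/
def AlgDimGE {d : ℕ} (j : ℕ) (V : Set (Fin d → ℝ)) : Prop :=
  ∃ W : Fin (j + 1) → Set (Fin d → ℝ),
    (∀ i, IsIrredAlgSet (W i)) ∧
    (∀ i i' : Fin (j + 1), i < i' → W i ⊂ W i') ∧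
    W (Fin.last j) ⊆ V

/-- The real algebraic set `V` has dimension exactly `j`. -/
def HasAlgDim {d : ℕ} (j : ℕ) (V : Set (Fin d → ℝ)) : Prop :=
  AlgDimGE j V ∧ ¬ AlgDimGE (j + 1) V

/-- An irreducible algebraic curve of degree at most `E` in `ℝ^d`: an irreducible
real algebraic set of dimension one, cut out by polynomials of degree at most `E`. -/
def IsIrredCurve {d : ℕ} (E : ℕ) (γ : Set (Fin d → ℝ)) : Prop :=
  IsAlgSetDeg E γ ∧ IsIrredAlgSet γ ∧ HasAlgDim 1 γ

/-- A finite family `C` of curves has `k` degrees of freedom with multiplicity `s`: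
(i) for every `k` distinct points, at most `s` curves of `C` pass through all of
them, and (ii) any two distinct curves of `C` intersect in at most `s` points. -/
def HasDegreesOfFreedom {d : ℕ} (C : Finset (Set (Fin d → ℝ))) (k s : ℕ) : Prop :=
  (∀ pts : Finset (Fin d → ℝ), pts.card = k →
      (C.filter fun γ => ∀ p ∈ pts, p ∈ γ).card ≤ s) ∧
  ∀ γ₁ ∈ C, ∀ γ₂ ∈ C, γ₁ ≠ γ₂ → (γ₁ ∩ γ₂).Finite ∧ (γ₁ ∩ γ₂).ncard ≤ s

/-- An algebraic curve of degree at most `E` in the plane: the zero set of a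
nonzero bivariate real polynomial of degree at most `E`. -/
def IsPlaneAlgCurve (E : ℕ) (γ : Set (Fin 2 → ℝ)) : Prop :=
  ∃ f : MvPolynomial (Fin 2) ℝ, f ≠ 0 ∧ f.totalDegree ≤ E ∧ γ = zeroSet f

/-!
A squarefree equation of a curve has simple roots over all but boundedly many abscissae, so away
from few vertical lines each curve is a disjoint union of at most `E` arcs, the graphs of continuous
functions. A sample of `r` of these arcs divides the plane into `O(r ^ 2)` trapezoids, each between
two arcs that are consecutive in height, and few incidences lie on the sampled arcs themselves. A
trapezoid is determined by at most four arcs of the sample, so by the Clarkson–Shor argument the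
`n` arcs cross only `O(r * n)` trapezoids altogether for a suitable sample. Inside a trapezoid, `k`
degrees of freedom give the Kővári–Sós–Turán bound, and `r` is chosen to balance the contributions.
-/
open Finset

section Sampling

variable {ι κ : Type*} {T : Finset ι → Finset κ} {conflict : ι → κ → Prop} {d : ℕ}

theorem sum_powersetCard_sum_sdiff {M : Type*} [AddCommMonoid M] (A : Finset ι) (r : ℕ)
    (g : Finset ι → ι → M) :
    ∑ R ∈ A.powersetCard r, ∑ a ∈ A \ R, g R a =
      ∑ S ∈ A.powersetCard (r + 1), ∑ a ∈ S, g (S.erase a) a := by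
  rw [sum_sigma', sum_sigma']
  refine sum_bij' (fun x _ ↦ ⟨insert x.2 x.1, x.2⟩) (fun x _ ↦ ⟨x.1.erase x.2, x.2⟩)
    ?_ ?_ ?_ ?_ ?_ <;> rintro ⟨R, a⟩ h <;>
    simp only [mem_sigma, mem_powersetCard, mem_sdiff] at h ⊢
  · exact ⟨⟨insert_subset h.2.1 h.1.1, by rw [card_insert_of_notMem h.2.2, h.1.2]⟩,
      mem_insert_self a R⟩
  · exact ⟨⟨(erase_subset a R).trans h.1.1, by rw [card_erase_of_mem h.2, h.1.2]; rfl⟩,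
      h.1.1 h.2, notMem_erase a R⟩
  · rw [erase_insert h.2.2]
  · rw [insert_erase h.2]
  · rw [erase_insert h.2.2]

/-- A configuration space in the sense of Clarkson and Shor: every sample `R` determines a finite
set `T R` of cells, a cell is in conflict with no member of the sample that determines it, and it
persists in all subsamples containing some `d` members of `R` that define it. -/
structure IsConfigurationSpace (T : Finset ι → Finset κ) (conflict : ι → κ → Prop) (d : ℕ) :
    Prop where
  not_conflict {R : Finset ι} {Δ : κ} (hΔ : Δ ∈ T R) {a : ι} (ha : a ∈ R) : ¬ conflict a Δ
  exists_defining {R : Finset ι} {Δ : κ} (hΔ : Δ ∈ T R) :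
    ∃ D ⊆ R, #D ≤ d ∧ ∀ R', D ⊆ R' → R' ⊆ R → Δ ∈ T R'

namespace IsConfigurationSpace

theorem union_right (hT : IsConfigurationSpace T conflict d) (F : Finset ι) :
    IsConfigurationSpace (fun R ↦ T (R ∪ F)) conflict d where
  not_conflict hΔ _ ha := hT.not_conflict hΔ (mem_union_left F ha)
  exists_defining {R Δ} hΔ := by
    obtain ⟨D, hDR, hD, hmem⟩ := hT.exists_defining hΔ
    refine ⟨D \ F, by grind, (card_le_card sdiff_subset).trans hD, fun R' hDR' hR' ↦ ?_⟩
    exact hmem (R' ∪ F) (by grind) (union_subset_union_left hR')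

theorem two_pow_le_card_samples (hT : IsConfigurationSpace T conflict d) {R : Finset ι} {Δ : κ}
    (hΔ : Δ ∈ T R) : 2 ^ #R ≤ 2 ^ d * #{R' ∈ R.powerset | Δ ∈ T R'} := by
  obtain ⟨D, hDR, hD, hmem⟩ := hT.exists_defining hΔ
  have hIcc : Icc D R ⊆ {R' ∈ R.powerset | Δ ∈ T R'} := fun R' hR' ↦ by
    rw [Finset.mem_Icc] at hR'
    exact mem_filter.2 ⟨mem_powerset.2 hR'.2, hmem R' hR'.1 hR'.2⟩
  calc 2 ^ #R = 2 ^ #D * #(Icc D R) := by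
        rw [card_Icc_finset hDR, ← pow_add, Nat.add_sub_cancel' (card_le_card hDR)]
    _ ≤ 2 ^ d * #{R' ∈ R.powerset | Δ ∈ T R'} := by gcongr; exact one_le_two

theorem pairwiseDisjoint_conflict (hT : IsConfigurationSpace T conflict d) (S : Finset ι) :
    (S : Set ι).PairwiseDisjoint fun a ↦ {Δ ∈ T (S.erase a) | conflict a Δ} := by
  refine fun a _ b hb hab ↦ disjoint_left.2 fun Δ ha hb' ↦ ?_
  exact hT.not_conflict (mem_filter.1 ha).1 (mem_erase.2 ⟨hab.symm, hb⟩) (mem_filter.1 hb').2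

variable {w : κ → ℝ} {W : ℝ}

/-- Backward analysis: remove one member of `S`, and weigh the cells in conflict with it. -/
theorem sum_erase_conflict_le (hT : IsConfigurationSpace T conflict d) (hw : ∀ Δ, 0 ≤ w Δ)
    {S : Finset ι} (hW : ∀ R ⊆ S, ∑ Δ ∈ T R, w Δ ≤ W) :
    ∑ a ∈ S, ∑ Δ ∈ T (S.erase a) with conflict a Δ, w Δ ≤ 2 ^ (d + 1) * W := by
  set 𝒟 : Finset κ := S.biUnion fun a ↦ {Δ ∈ T (S.erase a) | conflict a Δ} with h𝒟
  have hsamples : ∀ Δ ∈ 𝒟, (2 : ℝ) ^ #S ≤ 2 ^ (d + 1) * #{R ∈ S.powerset | Δ ∈ T R} := by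
    intro Δ hΔ
    obtain ⟨a, ha, hΔa⟩ := mem_biUnion.1 hΔ
    have hle := (hT.two_pow_le_card_samples (mem_filter.1 hΔa).1).trans <| Nat.mul_le_mul_left _ <|
      card_le_card <| filter_subset_filter _ <| powerset_mono.2 <| erase_subset a S
    rw [← card_erase_add_one ha, pow_succ, pow_succ, mul_right_comm]
    exact_mod_cast Nat.mul_le_mul_right 2 hle
  refine le_of_mul_le_mul_left ?_ (pow_pos (zero_lt_two' ℝ) #S)
  calc 2 ^ #S * ∑ a ∈ S, ∑ Δ ∈ T (S.erase a) with conflict a Δ, w Δ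
      = ∑ Δ ∈ 𝒟, 2 ^ #S * w Δ := by
        rw [← mul_sum, h𝒟, sum_biUnion (hT.pairwiseDisjoint_conflict S)]
    _ ≤ ∑ Δ ∈ 𝒟, 2 ^ (d + 1) * ∑ R ∈ S.powerset, if Δ ∈ T R then w Δ else 0 := by
        refine sum_le_sum fun Δ hΔ ↦ ?_
        rw [← sum_filter, sum_const, nsmul_eq_mul, ← mul_assoc]
        exact mul_le_mul_of_nonneg_right (hsamples Δ hΔ) (hw Δ)
    _ = 2 ^ (d + 1) * ∑ R ∈ S.powerset, ∑ Δ ∈ 𝒟 with Δ ∈ T R, w Δ := by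
        simp_rw [← mul_sum, sum_filter]
        rw [sum_comm]
    _ ≤ 2 ^ (d + 1) * ∑ _R ∈ S.powerset, W := by
        gcongr with R hR
        refine le_trans (sum_le_sum_of_subset_of_nonneg ?_ fun Δ _ _ ↦ hw Δ)
          (hW R (mem_powerset.1 hR))
        exact fun Δ hΔ ↦ (mem_filter.1 hΔ).2
    _ = 2 ^ #S * (2 ^ (d + 1) * W) := by
        rw [sum_const, card_powerset, nsmul_eq_mul]
        push_cast
        ring

theorem exists_sample (hT : IsConfigurationSpace T conflict d) (hw : ∀ Δ, 0 ≤ w Δ)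
    {A : Finset ι} {r : ℕ} (hr : r < #A) (hW : ∀ R ⊆ A, #R ≤ r + 1 → ∑ Δ ∈ T R, w Δ ≤ W) :
    ∃ R ⊆ A, #R = r ∧
      ∑ a ∈ A, ∑ Δ ∈ T R with conflict a Δ, w Δ ≤ 2 ^ (d + 1) * W * #A / (r + 1) := by
  have hW0 : 0 ≤ W := (sum_nonneg fun Δ _ ↦ hw Δ).trans (hW ∅ (empty_subset A) (by simp))
  have hsdiff : ∀ R ∈ A.powersetCard r, ∑ a ∈ A, ∑ Δ ∈ T R with conflict a Δ, w Δ =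
      ∑ a ∈ A \ R, ∑ Δ ∈ T R with conflict a Δ, w Δ := by
    refine fun R _ ↦ (sum_subset sdiff_subset fun a ha haR ↦ ?_).symm
    rw [filter_false_of_mem fun Δ hΔ ↦ hT.not_conflict hΔ (by simp_all), sum_empty]
  have hsum : ∑ R ∈ A.powersetCard r, ∑ a ∈ A, ∑ Δ ∈ T R with conflict a Δ, w Δ ≤
      ∑ R ∈ A.powersetCard r, 2 ^ (d + 1) * W * #A / (r + 1) := by
    have hchoose : ((#A).choose (r + 1) : ℝ) * (r + 1) ≤ (#A).choose r * #A := by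
      exact_mod_cast (Nat.choose_succ_right_eq _ _).trans_le (by gcongr; omega)
    rw [sum_congr rfl hsdiff, sum_powersetCard_sum_sdiff, sum_const, card_powersetCard,
      nsmul_eq_mul, ← mul_div_assoc, le_div_iff₀ (by positivity)]
    calc (∑ S ∈ A.powersetCard (r + 1), ∑ a ∈ S, ∑ Δ ∈ T (S.erase a) with conflict a Δ, w Δ) *
          (r + 1) ≤ (∑ S ∈ A.powersetCard (r + 1), 2 ^ (d + 1) * W) * (r + 1) := by
          gcongr with S hS
          rw [mem_powersetCard] at hS
          exact hT.sum_erase_conflict_le hw fun R hR ↦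
            hW R (hR.trans hS.1) ((card_le_card hR).trans hS.2.le)
      _ = (#A).choose (r + 1) * (r + 1) * (2 ^ (d + 1) * W) := by
          rw [sum_const, card_powersetCard, nsmul_eq_mul]
          ring
      _ ≤ (#A).choose r * #A * (2 ^ (d + 1) * W) := by gcongr
      _ = (#A).choose r * (2 ^ (d + 1) * W * #A) := by ring
  obtain ⟨R, hR, hle⟩ := exists_le_of_sum_le (powersetCard_nonempty.2 hr.le) hsum
  rw [mem_powersetCard] at hR
  exact ⟨R, hR.1, hR.2, hle⟩

end IsConfigurationSpace

end Sampling
open Filter Topology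

section Arcs

/-- A partial function with open domain on the `x`-axis, continuous there, whose graph is an arc
of a curve. Infinite values are allowed so that a finite family of arcs can be completed by a
lowest and a highest one. -/
structure Arc where
  dom : Set ℝ
  toFun : ℝ → EReal
  isOpen_dom : IsOpen dom
  continuousOn_toFun : ContinuousOn toFun dom

namespace Arc

instance : CoeFun Arc fun _ ↦ ℝ → EReal := ⟨toFun⟩

/-- An arbitrary linear order, used to break ties between arcs of equal height. -/
instance : LinearOrder Arc := IsWellOrder.linearOrder WellOrderingRel

/-- The points of the plane on an arc. -/
def graph (a : Arc) : Set (Fin 2 → ℝ) := {p | p 0 ∈ a.dom ∧ a (p 0) = p 1}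

/-- The abscissae at which two arcs meet. -/
def meet (a b : Arc) : Set ℝ := {x | x ∈ a.dom ∧ x ∈ b.dom ∧ a x = b x}

/-- The horizontal line at height `y`. -/
def const (y : EReal) : Arc where
  dom := Set.univ
  toFun _ := y
  isOpen_dom := isOpen_univ
  continuousOn_toFun := continuousOn_const

/-- The value of an arc at `x`, followed by the arc itself: distinct arcs have distinct heights. -/
def height (x : ℝ) (a : Arc) : EReal ×ₗ Arc := toLex (a x, a)

variable {a b : Arc} {x : ℝ}

theorem height_injective (x : ℝ) : Function.Injective (height x) := fun _ _ h ↦ congrArg (·.2) h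

theorem height_lt_height (h : a x < b x) : height x a < height x b :=
  Prod.Lex.toLex_lt_toLex.2 (.inl h)

theorem continuousAt (h : x ∈ a.dom) : ContinuousAt a x :=
  a.continuousOn_toFun.continuousAt (a.isOpen_dom.mem_nhds h)

theorem eventually_mem_dom_iff (h : x ∉ frontier a.dom) :
    ∀ᶠ z in 𝓝 x, (z ∈ a.dom ↔ x ∈ a.dom) := by
  by_cases hx : x ∈ a.dom
  · filter_upwards [a.isOpen_dom.mem_nhds hx] with z hz using iff_of_true hz hx
  · have hcl : x ∉ closure a.dom := fun hcl ↦ h ⟨hcl, by rwa [a.isOpen_dom.interior_eq]⟩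
    filter_upwards [isClosed_closure.isOpen_compl.mem_nhds hcl] with z hz
    exact iff_of_false (fun hza ↦ hz (subset_closure hza)) hx

theorem eventually_height_lt_iff (ha : x ∈ a.dom) (hb : x ∈ b.dom) (h : a ≠ b → x ∉ meet a b) :
    ∀ᶠ z in 𝓝 x, (height z a < height z b ↔ height x a < height x b) := by
  rcases eq_or_ne a b with rfl | hab
  · simp
  rcases lt_or_gt_of_ne fun heq ↦ h hab ⟨ha, hb, heq⟩ with hlt | hlt
  · filter_upwards [(continuousAt ha).eventually_lt (continuousAt hb) hlt] with z hz
    exact iff_of_true (height_lt_height hz) (height_lt_height hlt)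
  · filter_upwards [(continuousAt hb).eventually_lt (continuousAt ha) hlt] with z hz
    exact iff_of_false (height_lt_height hz).not_gt (height_lt_height hlt).not_gt

theorem meet_comm (a b : Arc) : meet a b = meet b a :=
  Set.ext fun _ ↦ ⟨fun ⟨ha, hb, h⟩ ↦ ⟨hb, ha, h.symm⟩, fun ⟨hb, ha, h⟩ ↦ ⟨ha, hb, h.symm⟩⟩

end Arc

end Arcs

section Cells

variable {R R' : Finset Arc} {α β α' β' : Arc} {x : ℝ} {p q w : Fin 2 → ℝ}

open Arc

/-- Over the abscissa `x`, the arcs `α` and `β` of `R` are consecutive in height. -/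
structure IsGap (R : Finset Arc) (x : ℝ) (α β : Arc) : Prop where
  floor_mem : α ∈ R
  roof_mem : β ∈ R
  mem_floor_dom : x ∈ α.dom
  mem_roof_dom : x ∈ β.dom
  floor_lt_roof : height x α < height x β
  not_between {c : Arc} (hc : c ∈ R) (hx : x ∈ c.dom) :
    ¬ (height x α < height x c ∧ height x c < height x β)

/-- The point `p` lies strictly above `α` and strictly below `β`. -/
def IsBetween (α β : Arc) (p : Fin 2 → ℝ) : Prop := α (p 0) < p 1 ∧ p 1 < β (p 0)

theorem IsGap.mono (h : IsGap R x α β) (hR : R' ⊆ R) (hα : α ∈ R') (hβ : β ∈ R') :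
    IsGap R' x α β where
  __ := h
  floor_mem := hα
  roof_mem := hβ
  not_between hc := h.not_between (hR hc)

theorem IsGap.roof_unique (h : IsGap R x α β) (h' : IsGap R x α β') : β = β' := by
  refine height_injective x (le_antisymm ?_ ?_)
  · exact not_lt.1 fun hlt ↦ h.not_between h'.roof_mem h'.mem_roof_dom ⟨h'.floor_lt_roof, hlt⟩
  · exact not_lt.1 fun hlt ↦ h'.not_between h.roof_mem h.mem_roof_dom ⟨h.floor_lt_roof, hlt⟩

theorem IsGap.floor_unique (h : IsGap R x α β) (h' : IsGap R x α' β) : α = α' := by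
  refine height_injective x (le_antisymm ?_ ?_)
  · exact not_lt.1 fun hlt ↦ h'.not_between h.floor_mem h.mem_floor_dom ⟨hlt, h.floor_lt_roof⟩
  · exact not_lt.1 fun hlt ↦ h.not_between h'.floor_mem h'.mem_floor_dom ⟨hlt, h'.floor_lt_roof⟩

theorem IsGap.unique (h : IsGap R (p 0) α β) (hp : IsBetween α β p) (h' : IsGap R (p 0) α' β')
    (hp' : IsBetween α' β' p) : α = α' ∧ β = β' := by
  have hαβ' : height (p 0) α < height (p 0) β' := height_lt_height (hp.1.trans hp'.2)
  have hα'β : height (p 0) α' < height (p 0) β := height_lt_height (hp'.1.trans hp.2)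
  have hα : α = α' := height_injective (p 0) <| le_antisymm
    (not_lt.1 fun hlt ↦ h'.not_between h.floor_mem h.mem_floor_dom ⟨hlt, hαβ'⟩)
    (not_lt.1 fun hlt ↦ h.not_between h'.floor_mem h'.mem_floor_dom ⟨hlt, hα'β⟩)
  subst hα
  exact ⟨rfl, h.roof_unique h'⟩

theorem IsGap.notMem_graph (h : IsGap R (p 0) α β) (hp : IsBetween α β p) {c : Arc} (hc : c ∈ R) :
    p ∉ c.graph := fun hpc ↦
  h.not_between hc hpc.1
    ⟨height_lt_height (hpc.2 ▸ hp.1), height_lt_height (hpc.2 ▸ hp.2)⟩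

/-- Two points lie in the same trapezoid of the vertical decomposition of the arcs in `R`. -/
def SameCell (R : Finset Arc) (p q : Fin 2 → ℝ) : Prop :=
  ∃ α β, IsBetween α β p ∧ IsBetween α β q ∧ ∀ x ∈ Set.uIcc (p 0) (q 0), IsGap R x α β

theorem sameCell_iff (h : IsGap R (p 0) α β) (hp : IsBetween α β p) :
    SameCell R p q ↔ IsBetween α β q ∧ ∀ x ∈ Set.uIcc (p 0) (q 0), IsGap R x α β := by
  refine ⟨?_, fun h ↦ ⟨α, β, hp, h⟩⟩
  rintro ⟨α', β', hp', hq, hgap⟩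
  obtain ⟨rfl, rfl⟩ := h.unique hp (hgap _ Set.left_mem_uIcc) hp'
  exact ⟨hq, hgap⟩

theorem sameCell_self_iff : SameCell R p p ↔ ∃ α β, IsBetween α β p ∧ IsGap R (p 0) α β := by
  simp [SameCell]

theorem SameCell.symm (h : SameCell R p q) : SameCell R q p := by
  obtain ⟨α, β, hp, hq, hgap⟩ := h
  exact ⟨α, β, hq, hp, Set.uIcc_comm (p 0) (q 0) ▸ hgap⟩

theorem SameCell.trans (h : SameCell R p q) (h' : SameCell R q w) : SameCell R p w := by
  obtain ⟨α, β, hp, hq, hgap⟩ := h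
  obtain ⟨hw, hgap'⟩ := (sameCell_iff (hgap _ Set.right_mem_uIcc) hq).1 h'
  exact ⟨α, β, hp, hw, fun x hx ↦
    (Set.uIcc_subset_uIcc_union_uIcc hx).elim (hgap x) (hgap' x)⟩

theorem SameCell.notMem_graph (h : SameCell R p q) {c : Arc} (hc : c ∈ R) : q ∉ c.graph := by
  obtain ⟨α, β, -, hq, hgap⟩ := h
  exact (hgap _ Set.right_mem_uIcc).notMem_graph hq hc

/-- The points of `P` in the trapezoid that contains `p`. -/
def cell (P : Finset (Fin 2 → ℝ)) (R : Finset Arc) (p : Fin 2 → ℝ) : Finset (Fin 2 → ℝ) :=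
  {q ∈ P | SameCell R p q}

/-- The cells into which the vertical decomposition of `R` divides the points of `P` lying between
two arcs of `R`. A cell is recorded by its points, so only nonempty trapezoids are counted. -/
def cells (P : Finset (Fin 2 → ℝ)) (R : Finset Arc) : Finset (Finset (Fin 2 → ℝ)) :=
  ({p ∈ P | SameCell R p p}).image (cell P R)

variable {P : Finset (Fin 2 → ℝ)}

theorem SameCell.cell_eq (h : SameCell R p q) : cell P R p = cell P R q :=
  filter_congr fun _ _ ↦ ⟨h.symm.trans, h.trans⟩

theorem pairwiseDisjoint_cells (P : Finset (Fin 2 → ℝ)) (R : Finset Arc) :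
    (cells P R : Set (Finset (Fin 2 → ℝ))).PairwiseDisjoint id := by
  intro Δ hΔ Δ' hΔ' hne
  obtain ⟨p, -, rfl⟩ := mem_image.1 hΔ
  obtain ⟨q, -, rfl⟩ := mem_image.1 hΔ'
  refine disjoint_left.2 fun w hp hq ↦ hne ?_
  exact (mem_filter.1 hp).2.cell_eq.trans (mem_filter.1 hq).2.cell_eq.symm

theorem sum_card_cells_le (P : Finset (Fin 2 → ℝ)) (R : Finset Arc) :
    ∑ Δ ∈ cells P R, #Δ ≤ #P := by
  refine (card_biUnion (pairwiseDisjoint_cells P R)).symm.trans_le ?_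
  refine card_le_card (biUnion_subset.2 fun Δ hΔ ↦ ?_)
  obtain ⟨p, -, rfl⟩ := mem_image.1 hΔ
  exact filter_subset _ P

/-- If the intervals `I q` are nested, the shortest one over which `α`, `β` fail to be a gap
contains an arc that witnesses the failure for all of them. -/
theorem exists_gap_witness {ρ : Type*} (Q : Finset ρ) {I : ρ → Set ℝ} {f : ρ → ℝ}
    (hI : ∀ q ∈ Q, ∀ q' ∈ Q, f q ≤ f q' → I q ⊆ I q') (hα : α ∈ R) (hβ : β ∈ R) :
    ∃ c ∈ R, ∀ q ∈ Q, ∀ R', c ∈ R' → (∀ x ∈ I q, IsGap R' x α β) → ∀ x ∈ I q, IsGap R x α β := by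
  by_cases hbad : ({q ∈ Q | ∃ x ∈ I q, ¬ IsGap R x α β}).Nonempty
  · obtain ⟨q₀, hq₀, hmin⟩ := exists_min_image _ f hbad
    obtain ⟨hq₀Q, x₀, hx₀, hx₀gap⟩ := mem_filter.1 hq₀
    obtain ⟨c, hc, hcgap⟩ : ∃ c ∈ R, ∀ R', c ∈ R' → ¬ IsGap R' x₀ α β := by
      by_contra! hcon
      obtain ⟨R', -, h⟩ := hcon α hα
      refine hx₀gap { h with floor_mem := hα, roof_mem := hβ, not_between := fun hc hx ↦ ?_ }
      obtain ⟨R'', hc', h'⟩ := hcon _ hc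
      exact h'.not_between hc' hx
    refine ⟨c, hc, fun q hq R' hR' hgap ↦ ?_⟩
    by_contra! hcon
    exact hcgap R' hR' <| hgap x₀ <| hI q₀ hq₀Q q hq (hmin q (mem_filter.2 ⟨hq, hcon⟩)) hx₀
  · refine ⟨α, hα, fun q hq _ _ _ ↦ ?_⟩
    by_contra! hcon
    exact hbad ⟨q, mem_filter.2 ⟨hq, hcon⟩⟩

/-- A trapezoid is determined by its floor, its roof, and one arc bounding it on either side. -/
theorem exists_defining_arcs (P : Finset (Fin 2 → ℝ)) (h : SameCell R p p) :
    ∃ D ⊆ R, #D ≤ 4 ∧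
      ∀ R', D ⊆ R' → R' ⊆ R → SameCell R' p p ∧ cell P R' p = cell P R p := by
  obtain ⟨α, β, hp, hgap⟩ := sameCell_self_iff.1 h
  obtain ⟨l, hl, hleft⟩ := exists_gap_witness {q ∈ P | q 0 ≤ p 0}
    (I := fun q ↦ Set.uIcc (p 0) (q 0)) (f := fun q ↦ -q 0) (fun q hq q' hq' hle ↦ by
      rw [Set.uIcc_of_ge (mem_filter.1 hq).2, Set.uIcc_of_ge (mem_filter.1 hq').2]
      exact Set.Icc_subset_Icc_left (neg_le_neg_iff.1 hle)) hgap.floor_mem hgap.roof_mem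
  obtain ⟨r, hr, hright⟩ := exists_gap_witness {q ∈ P | p 0 ≤ q 0}
    (I := fun q ↦ Set.uIcc (p 0) (q 0)) (f := fun q ↦ q 0) (fun q hq q' hq' hle ↦ by
      rw [Set.uIcc_of_le (mem_filter.1 hq).2, Set.uIcc_of_le (mem_filter.1 hq').2]
      exact Set.Icc_subset_Icc_right hle) hgap.floor_mem hgap.roof_mem
  refine ⟨{α, β, l, r}, ?_, card_le_four, fun R' hD hR' ↦ ?_⟩
  · simp [insert_subset_iff, hgap.floor_mem, hgap.roof_mem, hl, hr]
  obtain ⟨hα, hβ, hl', hr'⟩ : α ∈ R' ∧ β ∈ R' ∧ l ∈ R' ∧ r ∈ R' := by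
    simpa [insert_subset_iff] using hD
  have hgap' := hgap.mono hR' hα hβ
  refine ⟨sameCell_self_iff.2 ⟨α, β, hp, hgap'⟩, filter_congr fun q hq ↦ ?_⟩
  rw [sameCell_iff hgap hp, sameCell_iff hgap' hp]
  refine and_congr_right fun _ ↦ ⟨fun hall ↦ ?_, fun hall x hx ↦ (hall x hx).mono hR' hα hβ⟩
  rcases le_total (q 0) (p 0) with hle | hle
  · exact hleft q (mem_filter.2 ⟨hq, hle⟩) R' hl' hall
  · exact hright q (mem_filter.2 ⟨hq, hle⟩) R' hr' hall

/-- An arc crosses a cell if it passes through one of the points by which the cell is recorded. -/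
def Arc.Crosses (a : Arc) (Δ : Finset (Fin 2 → ℝ)) : Prop := ∃ p ∈ Δ, p ∈ a.graph

theorem isConfigurationSpace_cells (P : Finset (Fin 2 → ℝ)) :
    IsConfigurationSpace (cells P) Crosses 4 where
  not_conflict {R Δ} hΔ a ha := by
    obtain ⟨p, -, rfl⟩ := mem_image.1 hΔ
    rintro ⟨q, hq, hqa⟩
    exact (mem_filter.1 hq).2.notMem_graph ha hqa
  exists_defining {R Δ} hΔ := by
    obtain ⟨p, hp, rfl⟩ := mem_image.1 hΔ
    rw [mem_filter] at hp
    obtain ⟨D, hDR, hD, hdef⟩ := exists_defining_arcs P hp.2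
    refine ⟨D, hDR, hD, fun R' hD hR' ↦ mem_image.2 ⟨p, mem_filter.2 ⟨hp.1, ?_⟩, ?_⟩⟩
    · exact (hdef R' hD hR').1
    · exact (hdef R' hD hR').2

/-- The two arcs at infinity, which make every cell bounded above and below. -/
def sentinels : Finset Arc := {const ⊥, const ⊤}

theorem exists_mem_cells (hR : sentinels ⊆ R) (hp : p ∈ P) (hoff : ∀ c ∈ R, p ∉ c.graph) :
    ∃ Δ ∈ cells P R, p ∈ Δ := by
  obtain ⟨hbot, htop⟩ : const ⊥ ∈ R ∧ const ⊤ ∈ R := by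
    simpa [sentinels, insert_subset_iff] using hR
  obtain ⟨α, hα, hmax⟩ := exists_max_image
    {c ∈ R | p 0 ∈ c.dom ∧ c (p 0) < (p 1 : EReal)} (height (p 0))
    ⟨const ⊥, mem_filter.2 ⟨hbot, Set.mem_univ _, EReal.bot_lt_coe _⟩⟩
  obtain ⟨β, hβ, hmin⟩ := exists_min_image
    {c ∈ R | p 0 ∈ c.dom ∧ (p 1 : EReal) < c (p 0)} (height (p 0))
    ⟨const ⊤, mem_filter.2 ⟨htop, Set.mem_univ _, EReal.coe_lt_top _⟩⟩
  rw [mem_filter] at hα hβ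
  have hcell : SameCell R p p := sameCell_self_iff.2 ⟨α, β, ⟨hα.2.2, hβ.2.2⟩, {
    floor_mem := hα.1
    roof_mem := hβ.1
    mem_floor_dom := hα.2.1
    mem_roof_dom := hβ.2.1
    floor_lt_roof := height_lt_height (hα.2.2.trans hβ.2.2)
    not_between := fun {c} hc hx ⟨hlt, hlt'⟩ ↦ by
      rcases lt_or_gt_of_ne fun heq ↦ hoff c hc ⟨hx, heq⟩ with hcp | hcp
      · exact (hmax c (mem_filter.2 ⟨hc, hx, hcp⟩)).not_gt hlt
      · exact (hmin c (mem_filter.2 ⟨hc, hx, hcp⟩)).not_gt hlt' }⟩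
  exact ⟨cell P R p, mem_image_of_mem _ (mem_filter.2 ⟨hp, hcell⟩), mem_filter.2 ⟨hp, hcell⟩⟩

end Cells

section CellCount

open Arc

variable {R : Finset Arc} {α β α' β' : Arc} {p q : Fin 2 → ℝ}

/-- The abscissae at which a trapezoid with floor or roof `a` may begin: the ends of the domains of
the arcs in `R`, the meeting points with `a`, and `⊥` for a trapezoid unbounded to the left. -/
def events (R : Finset Arc) (a : Arc) : Set EReal :=
  insert ⊥ ((↑) '' ((⋃ c ∈ R, frontier c.dom) ∪ ⋃ c ∈ R.erase a, meet a c))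

/-- Any two arcs of `A` meet at most `s` times, and the domain of each has at most `t` boundary
points. -/
structure IsArcSystem (s t : ℕ) (A : Finset Arc) : Prop where
  encard_meet_le {a b : Arc} (ha : a ∈ A) (hb : b ∈ A) (hab : a ≠ b) : (meet a b).encard ≤ s
  encard_frontier_le {a : Arc} (ha : a ∈ A) : (frontier a.dom).encard ≤ t

variable {s t : ℕ}

theorem IsArcSystem.mono (hR : IsArcSystem s t R) {R' : Finset Arc} (h : R' ⊆ R) :
    IsArcSystem s t R' where
  encard_meet_le ha hb := hR.encard_meet_le (h ha) (h hb)
  encard_frontier_le ha := hR.encard_frontier_le (h ha)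

theorem IsArcSystem.encard_events_le (hR : IsArcSystem s t R) {a : Arc} (ha : a ∈ R) :
    (events R a).encard ≤ (s + t + 1) * #R := by
  have hfrontier : (⋃ c ∈ R, frontier c.dom).encard ≤ #R * t := by
    refine (set_encard_biUnion_le R _).trans ?_
    exact (sum_le_card_nsmul R _ _ fun c hc ↦ hR.encard_frontier_le hc).trans_eq (nsmul_eq_mul _ _)
  have hmeet : (⋃ c ∈ R.erase a, meet a c).encard ≤ #R * s := by
    refine (set_encard_biUnion_le _ _).trans ((sum_le_card_nsmul _ _ _ fun c hc ↦
      hR.encard_meet_le ha (mem_of_mem_erase hc) (ne_of_mem_erase hc).symm).trans ?_)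
    rw [nsmul_eq_mul]
    gcongr
    exact erase_subset a R
  have hone : (1 : ℕ∞) ≤ #R := by exact_mod_cast card_pos.2 ⟨a, ha⟩
  calc (events R a).encard
      ≤ ((⋃ c ∈ R, frontier c.dom).encard + (⋃ c ∈ R.erase a, meet a c).encard) + 1 := by
        refine (Set.encard_insert_le _ _).trans ?_
        gcongr
        exact (Set.encard_image_le _ _).trans (Set.encard_union_le _ _)
    _ ≤ (#R * t + #R * s) + #R := by gcongr
    _ = (s + t + 1) * #R := by ring

theorem coe_mem_events_of_mem_frontier {x : ℝ} {c : Arc} (a : Arc) (hc : c ∈ R)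
    (hx : x ∈ frontier c.dom) : (x : EReal) ∈ events R a :=
  .inr (Set.mem_image_of_mem _ (.inl (Set.mem_biUnion hc hx)))

theorem coe_mem_events_of_mem_meet {x : ℝ} {a c : Arc} (hc : c ∈ R) (hac : a ≠ c)
    (hx : x ∈ meet a c) : (x : EReal) ∈ events R a :=
  .inr (Set.mem_image_of_mem _ (.inr (Set.mem_biUnion (mem_erase.2 ⟨hac.symm, hc⟩) hx)))

theorem eventually_isGap_iff {x : ℝ} (hα : α ∈ R) (hβ : β ∈ R) (hxα : ↑x ∉ events R α)
    (hxβ : ↑x ∉ events R β) : ∀ᶠ z in 𝓝 x, (IsGap R z α β ↔ IsGap R x α β) := by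
  have hdom : ∀ᶠ z in 𝓝 x, ∀ c ∈ R, (z ∈ c.dom ↔ x ∈ c.dom) :=
    (eventually_all_finset R).2 fun c hc ↦
      eventually_mem_dom_iff fun h ↦ hxα (coe_mem_events_of_mem_frontier α hc h)
  have hlow : ∀ᶠ z in 𝓝 x, ∀ c ∈ R, x ∈ α.dom → x ∈ c.dom →
      (height z α < height z c ↔ height x α < height x c) := by
    simp only [eventually_all_finset, eventually_all]
    exact fun c hc hxα' hxc ↦ eventually_height_lt_iff hxα' hxc fun hne h ↦
      hxα (coe_mem_events_of_mem_meet hc hne h)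
  have hhigh : ∀ᶠ z in 𝓝 x, ∀ c ∈ R, x ∈ c.dom → x ∈ β.dom →
      (height z c < height z β ↔ height x c < height x β) := by
    simp only [eventually_all_finset, eventually_all]
    exact fun c hc hxc hxβ' ↦ eventually_height_lt_iff hxc hxβ' fun hne h ↦
      hxβ (coe_mem_events_of_mem_meet hc hne.symm (meet_comm c β ▸ h))
  filter_upwards [hdom, hlow, hhigh] with z hdom hlow hhigh
  have hlive : z ∈ α.dom ∧ z ∈ β.dom ↔ x ∈ α.dom ∧ x ∈ β.dom := and_congr (hdom α hα) (hdom β hβ)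
  constructor
  · intro h
    obtain ⟨hxα', hxβ'⟩ := hlive.1 ⟨h.mem_floor_dom, h.mem_roof_dom⟩
    exact ⟨hα, hβ, hxα', hxβ', (hlow β hβ hxα' hxβ').1 h.floor_lt_roof, fun hc hxc hbtw ↦
      h.not_between hc ((hdom _ hc).2 hxc)
        ⟨(hlow _ hc hxα' hxc).2 hbtw.1, (hhigh _ hc hxc hxβ').2 hbtw.2⟩⟩
  · intro h
    obtain ⟨hxα', hxβ'⟩ : x ∈ α.dom ∧ x ∈ β.dom := ⟨h.mem_floor_dom, h.mem_roof_dom⟩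
    obtain ⟨hzα, hzβ⟩ := hlive.2 ⟨hxα', hxβ'⟩
    exact ⟨hα, hβ, hzα, hzβ, (hlow β hβ hxα' hxβ').2 h.floor_lt_roof, fun hc hzc hbtw ↦
      have hxc := (hdom _ hc).1 hzc
      h.not_between hc hxc ⟨(hlow _ hc hxα' hxc).1 hbtw.1, (hhigh _ hc hxc hxβ').1 hbtw.2⟩⟩

/-- The gap between `α` and `β` at `p` extends to the left as far as `e`. The abscissa `e` itself
is only included if it is that of `p`. -/
def ExtendsLeftTo (R : Finset Arc) (e : EReal) (α β : Arc) (p : Fin 2 → ℝ) : Prop :=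
  e ≤ p 0 ∧ ∀ x ≤ p 0, e < x ∨ x = p 0 → IsGap R x α β

theorem IsGap.exists_extendsLeftTo (h : IsGap R (p 0) α β) :
    ∃ e, (e ∈ events R α ∨ e ∈ events R β) ∧ ExtendsLeftTo R e α β p := by
  set bad : Set ℝ := {x | x ≤ p 0 ∧ ¬ IsGap R x α β}
  rcases bad.eq_empty_or_nonempty with hbad | hbad
  · refine ⟨⊥, .inl (Set.mem_insert _ _), bot_le, fun x hx _ ↦ ?_⟩
    by_contra hgap
    exact Set.eq_empty_iff_forall_notMem.1 hbad x ⟨hx, hgap⟩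
  have hle : p 0 ∈ upperBounds bad := fun x hx ↦ hx.1
  have hlub : IsLUB bad (sSup bad) := isLUB_csSup hbad ⟨p 0, hle⟩
  refine ⟨(sSup bad : ℝ), ?_, EReal.coe_le_coe_iff.2 (hlub.2 hle), ?_⟩
  · by_contra! hevents
    have hconst := eventually_isGap_iff h.floor_mem h.roof_mem hevents.1 hevents.2
    have hgap : ¬ IsGap R (sSup bad) α β := by
      obtain ⟨x, hx, hiff⟩ := ((hlub.frequently_mem hbad).and_eventually
        (hconst.filter_mono nhdsWithin_le_nhds)).exists
      exact fun hgap ↦ hx.2 (hiff.2 hgap)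
    have hlt : sSup bad < p 0 := (hlub.2 hle).lt_of_ne fun heq ↦ hgap (heq ▸ h)
    obtain ⟨x, hiff, hx⟩ := ((hconst.filter_mono nhdsWithin_le_nhds).and
      (Ioo_mem_nhdsGT hlt)).exists
    exact hx.1.not_ge (hlub.1 ⟨hx.2.le, fun hgap' ↦ hgap (hiff.1 hgap')⟩)
  · rintro x hx (hlt | rfl)
    · by_contra hgap
      exact (EReal.coe_lt_coe_iff.1 hlt).not_ge (hlub.1 ⟨hx, hgap⟩)
    · exact h

theorem ExtendsLeftTo.sameCell {e : EReal} (hp : ExtendsLeftTo R e α β p)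
    (hq : ExtendsLeftTo R e α' β' q) (hpβ : IsBetween α β p) (hqβ : IsBetween α' β' q)
    (he : e < p 0 ↔ e < q 0) (h : α = α' ∨ β = β') : SameCell R p q := by
  wlog hle : p 0 ≤ q 0 generalizing p q α β α' β'
  · exact (this hq hp hqβ hpβ he.symm (h.imp Eq.symm Eq.symm) (le_of_not_ge hle)).symm
  have hgap : ∀ x ∈ Set.Icc (p 0) (q 0), IsGap R x α' β' := by
    refine fun x hx ↦ hq.2 x hx.2 ?_
    rcases hp.1.lt_or_eq with hlt | heq
    · exact .inl (hlt.trans_le (EReal.coe_le_coe_iff.2 hx.1))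
    · refine .inr (hx.2.antisymm (le_trans ?_ hx.1))
      rw [← EReal.coe_le_coe_iff, ← heq]
      exact not_lt.1 (he.not.1 heq.not_lt)
  have hp' := hp.2 (p 0) le_rfl (.inr rfl)
  have hq' := hgap (p 0) (Set.left_mem_Icc.2 hle)
  obtain ⟨rfl, rfl⟩ : α = α' ∧ β = β' := by
    rcases h with rfl | rfl
    · exact ⟨rfl, hp'.roof_unique hq'⟩
    · exact ⟨hp'.floor_unique hq', rfl⟩
  exact ⟨α, β, hpβ, hqβ, by rwa [Set.uIcc_of_le hle]⟩

/-- The cell of `p` is bounded by the arc `a`, as floor if `isFloor` holds and as roof otherwise,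
and begins at `e`, which is the abscissa of `p` unless `isLeft` holds. -/
def IsKey (R : Finset Arc) (p : Fin 2 → ℝ) :
    (Σ _ : Arc, EReal) × Bool × Bool → Prop
  | (⟨a, e⟩, isFloor, isLeft) => ∃ α β, IsBetween α β p ∧ ExtendsLeftTo R e α β p ∧
      a = (if isFloor then α else β) ∧ (isLeft ↔ e < p 0)

theorem IsKey.sameCell {k : (Σ _ : Arc, EReal) × Bool × Bool} (hp : IsKey R p k)
    (hq : IsKey R q k) : SameCell R p q := by
  obtain ⟨⟨a, e⟩, isFloor, isLeft⟩ := k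
  obtain ⟨α, β, hpβ, hpe, rfl, hpl⟩ := hp
  obtain ⟨α', β', hqβ, hqe, ha, hql⟩ := hq
  refine hpe.sameCell hqe hpβ hqβ (hpl.symm.trans hql) ?_
  cases isFloor
  · exact .inr (by simpa using ha)
  · exact .inl (by simpa using ha)

theorem SameCell.exists_isKey (h : SameCell R p p) :
    ∃ a ∈ R, ∃ e ∈ events R a, ∃ isFloor isLeft : Bool, IsKey R p (⟨a, e⟩, isFloor, isLeft) := by
  obtain ⟨α, β, hp, hgap⟩ := sameCell_self_iff.1 h
  obtain ⟨e, he | he, hext⟩ := hgap.exists_extendsLeftTo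
  · exact ⟨α, hgap.floor_mem, e, he, true, decide (e < p 0), α, β, hp, hext, by simp, by simp⟩
  · exact ⟨β, hgap.roof_mem, e, he, false, decide (e < p 0), α, β, hp, hext, by simp, by simp⟩

theorem IsArcSystem.card_cells_le (hR : IsArcSystem s t R) (P : Finset (Fin 2 → ℝ)) :
    #(cells P R) ≤ 4 * (s + t + 1) * #R ^ 2 := by
  have hfin : ∀ a ∈ R, (events R a).Finite ∧ (events R a).ncard ≤ (s + t + 1) * #R := fun a ha ↦
    Set.encard_le_coe_iff_finite_ncard_le.1 (by exact_mod_cast hR.encard_events_le ha)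
  set E : Arc → Finset EReal := fun a ↦ if ha : a ∈ R then (hfin a ha).1.toFinset else ∅
  have hE : ∀ a ∈ R, #(E a) ≤ (s + t + 1) * #R := fun a ha ↦ by
    simpa [E, ha, ← Set.ncard_eq_toFinset_card] using (hfin a ha).2
  calc #(cells P R) ≤ #(R.sigma E ×ˢ (univ : Finset (Bool × Bool))) := by
        refine card_le_card_of_forall_subsingleton
          (fun Δ k ↦ ∃ p, Δ = cell P R p ∧ IsKey R p k) (fun Δ hΔ ↦ ?_) ?_
        · obtain ⟨p, hp, rfl⟩ := mem_image.1 hΔ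
          obtain ⟨a, ha, e, he, isFloor, isLeft, hk⟩ := (mem_filter.1 hp).2.exists_isKey
          exact ⟨_, by simpa [E, ha] using he, p, rfl, hk⟩
        · rintro k - _ ⟨-, p, rfl, hp⟩ _ ⟨-, q, rfl, hq⟩
          exact (hp.sameCell hq).cell_eq
    _ = (∑ a ∈ R, #(E a)) * 4 := by rw [card_product, card_sigma]; rfl
    _ ≤ (#R • ((s + t + 1) * #R)) * 4 := by gcongr; exact sum_le_card_nsmul R _ _ hE
    _ = 4 * (s + t + 1) * #R ^ 2 := by rw [smul_eq_mul]; ring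

theorem meet_const_eq_empty {a : Arc} {y : EReal} (h : ∀ x ∈ a.dom, a x ≠ y) :
    meet a (const y) = ∅ :=
  Set.eq_empty_iff_forall_notMem.2 fun x hx ↦ h x hx.1 hx.2.2

theorem meet_sentinel_eq_empty (hreal : ∀ a ∈ R, ∀ x ∈ a.dom, a x ≠ ⊥ ∧ a x ≠ ⊤) {a b : Arc}
    (ha : a ∈ R ∪ sentinels) (hb : b ∈ sentinels) (hab : a ≠ b) : meet a b = ∅ := by
  simp only [sentinels, mem_union, mem_insert, mem_singleton] at ha hb
  rcases hb with rfl | rfl <;> refine meet_const_eq_empty fun x hx ↦ ?_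
  · rcases ha with ha | rfl | rfl
    exacts [(hreal a ha x hx).1, absurd rfl hab, top_ne_bot]
  · rcases ha with ha | rfl | rfl
    exacts [(hreal a ha x hx).2, bot_ne_top, absurd rfl hab]

theorem IsArcSystem.union_sentinels (hR : IsArcSystem s t R)
    (hreal : ∀ a ∈ R, ∀ x ∈ a.dom, a x ≠ ⊥ ∧ a x ≠ ⊤) : IsArcSystem s t (R ∪ sentinels) where
  encard_meet_le {a b} ha hb hab := by
    by_cases hb' : b ∈ sentinels
    · simp [meet_sentinel_eq_empty hreal ha hb' hab]
    by_cases ha' : a ∈ sentinels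
    · simp [meet_comm a b, meet_sentinel_eq_empty hreal hb ha' hab.symm]
    · exact hR.encard_meet_le ((mem_union.1 ha).resolve_right ha')
        ((mem_union.1 hb).resolve_right hb') hab
  encard_frontier_le {a} ha := by
    rcases mem_union.1 ha with ha | ha
    · exact hR.encard_frontier_le ha
    · simp only [sentinels, mem_insert, mem_singleton] at ha
      rcases ha with rfl | rfl <;> simp [const]

end CellCount

section KovariSosTuran

variable {ι α : Type*} {on : ι → α → Prop} {B : Finset ι} {Δ : Finset α} {k s : ℕ}

theorem sum_choose_card_le
    (h : ∀ pts ⊆ Δ, #pts = k → #{a ∈ B | ∀ p ∈ pts, on a p} ≤ s) :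
    ∑ a ∈ B, (#{p ∈ Δ | on a p}).choose k ≤ s * (#Δ).choose k := by
  have hpowerset : ∀ a, (#{p ∈ Δ | on a p}).choose k =
      #{pts ∈ Δ.powersetCard k | ∀ p ∈ pts, on a p} := fun a ↦ by
    rw [← card_powersetCard]
    congr 1
    grind
  calc ∑ a ∈ B, (#{p ∈ Δ | on a p}).choose k
      = ∑ pts ∈ Δ.powersetCard k, #{a ∈ B | ∀ p ∈ pts, on a p} := by
        rw [sum_congr rfl fun a _ ↦ hpowerset a]
        exact sum_card_bipartiteAbove_eq_sum_card_bipartiteBelow fun a pts ↦ ∀ p ∈ pts, on a p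
    _ ≤ #(Δ.powersetCard k) • s := sum_le_card_nsmul _ _ _ fun pts hpts ↦ by
        rw [mem_powersetCard] at hpts
        exact h pts hpts.1 hpts.2
    _ = s * (#Δ).choose k := by rw [card_powersetCard, smul_eq_mul, mul_comm]

theorem sum_descFactorial_card_le
    (h : ∀ pts ⊆ Δ, #pts = k → #{a ∈ B | ∀ p ∈ pts, on a p} ≤ s) :
    ∑ a ∈ B, (#{p ∈ Δ | on a p}).descFactorial k ≤ s * #Δ ^ k :=
  calc ∑ a ∈ B, (#{p ∈ Δ | on a p}).descFactorial k
      = k.factorial * ∑ a ∈ B, (#{p ∈ Δ | on a p}).choose k := by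
        simp_rw [Nat.descFactorial_eq_factorial_mul_choose, mul_sum]
    _ ≤ k.factorial * (s * (#Δ).choose k) := by gcongr; exact sum_choose_card_le h
    _ = s * (#Δ).descFactorial k := by rw [Nat.descFactorial_eq_factorial_mul_choose]; ring
    _ ≤ s * #Δ ^ k := by gcongr; exact Nat.descFactorial_le_pow _ _

theorem natCast_le_add_descFactorial_div_pow (n k : ℕ) {t : ℝ} (ht : 0 < t) :
    (n : ℝ) ≤ k + t + n.descFactorial (k + 1) / t ^ k := by
  have hpow : ((n - k : ℕ) : ℝ) ^ (k + 1) ≤ n.descFactorial (k + 1) := by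
    exact_mod_cast Nat.add_sub_add_right n 1 k ▸ Nat.pow_sub_le_descFactorial n (k + 1)
  have hsub : (n : ℝ) ≤ k + (n - k : ℕ) := by exact_mod_cast (show n ≤ k + (n - k) by omega)
  suffices ((n - k : ℕ) : ℝ) ≤ t + n.descFactorial (k + 1) / t ^ k by linarith
  rcases le_total ((n - k : ℕ) : ℝ) t with hle | hle
  · exact hle.trans (le_add_of_nonneg_right (by positivity))
  · refine le_add_of_nonneg_of_le ht.le ((le_div_iff₀ (by positivity)).2 (hpow.trans' ?_))
    rw [pow_succ']
    gcongr

/-- The parameter `lam` trades off the two superlinear terms. -/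
theorem sum_card_le_of_forall_card_le {lam : ℝ} (hlam : 0 < lam)
    (h : ∀ pts ⊆ Δ, #pts = k + 1 → #{a ∈ B | ∀ p ∈ pts, on a p} ≤ s) :
    ∑ a ∈ B, (#{p ∈ Δ | on a p} : ℝ) ≤ (k + #Δ / lam) * #B + s * lam ^ k * #Δ := by
  rcases Δ.eq_empty_or_nonempty with rfl | hΔ
  · simp only [filter_empty, card_empty, Nat.cast_zero, sum_const_zero]
    positivity
  have := hΔ.card_pos
  calc ∑ a ∈ B, (#{p ∈ Δ | on a p} : ℝ)
      ≤ ∑ a ∈ B, (k + #Δ / lam +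
          (#{p ∈ Δ | on a p}).descFactorial (k + 1) / (#Δ / lam) ^ k) := by
        gcongr
        exact natCast_le_add_descFactorial_div_pow _ _ (by positivity)
    _ = (k + #Δ / lam) * #B +
          (∑ a ∈ B, (#{p ∈ Δ | on a p}).descFactorial (k + 1) : ℕ) / (#Δ / lam) ^ k := by
        rw [sum_add_distrib, sum_const, nsmul_eq_mul, ← sum_div, Nat.cast_sum, mul_comm]
    _ ≤ (k + #Δ / lam) * #B + (s * #Δ ^ (k + 1) : ℕ) / (#Δ / lam) ^ k := by
        gcongr
        exact sum_descFactorial_card_le h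
    _ = (k + #Δ / lam) * #B + s * lam ^ k * #Δ := by
        rw [div_pow]
        push_cast
        field_simp
        ring

end KovariSosTuran

section ArcIncidences

open Arc

variable {s t : ℕ} {A R : Finset Arc} {P : Finset (Fin 2 → ℝ)}

theorem IsArcSystem.card_common_le (hA : IsArcSystem s t A) (P : Finset (Fin 2 → ℝ)) {a b : Arc}
    (ha : a ∈ A) (hb : b ∈ A) (hab : a ≠ b) : #{p ∈ P | p ∈ a.graph ∧ p ∈ b.graph} ≤ s := by
  suffices (({p ∈ P | p ∈ a.graph ∧ p ∈ b.graph} : Finset _) : Set (Fin 2 → ℝ)).encard ≤ s by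
    rwa [Set.encard_coe_eq_coe_finsetCard, Nat.cast_le] at this
  refine (Set.encard_le_encard_of_injOn (f := (· 0)) (t := meet a b) ?_ ?_).trans
    (hA.encard_meet_le ha hb hab)
  · intro p hp
    obtain ⟨-, hpa, hpb⟩ := mem_filter.1 hp
    exact ⟨hpa.1, hpb.1, hpa.2.trans hpb.2.symm⟩
  · intro p hp q hq (hpq : p 0 = q 0)
    have hp1 := (mem_filter.1 hp).2.1.2
    have hq1 := (mem_filter.1 hq).2.1.2
    have : p 1 = q 1 := EReal.coe_injective (hp1.symm.trans (hpq ▸ hq1))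
    ext i
    fin_cases i <;> assumption

theorem IsArcSystem.sum_card_on_sample_le (hA : IsArcSystem s t A) (hR : R ⊆ A)
    (P : Finset (Fin 2 → ℝ)) :
    ∑ a ∈ A, #{p ∈ P | (∃ c ∈ R, p ∈ c.graph) ∧ p ∈ a.graph} ≤ #P + s * #R * #A := by
  set f : (Fin 2 → ℝ) → Arc := fun p ↦
    if h : ∃ c ∈ R, p ∈ c.graph then h.choose else const ⊥
  have hf : ∀ p, (∃ c ∈ R, p ∈ c.graph) → f p ∈ R ∧ p ∈ (f p).graph := fun p h ↦ by
    simpa [f, h] using h.choose_spec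
  have hcard : ∀ a ∈ A, #{p ∈ P | (∃ c ∈ R, p ∈ c.graph) ∧ p ∈ a.graph} ≤
      #{p ∈ P | f p = a} + s * #R := by
    intro a ha
    have hsub : ({p ∈ P | (∃ c ∈ R, p ∈ c.graph) ∧ p ∈ a.graph} : Finset _) ⊆
        {p ∈ P | f p = a} ∪
          (R.erase a).biUnion fun c ↦ {p ∈ P | p ∈ a.graph ∧ p ∈ c.graph} := by
      intro p hp
      obtain ⟨hpP, hpR, hpa⟩ := mem_filter.1 hp
      by_cases hfa : f p = a
      · exact mem_union_left _ (mem_filter.2 ⟨hpP, hfa⟩)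
      · exact mem_union_right _ <| mem_biUnion.2
          ⟨f p, mem_erase.2 ⟨hfa, (hf p hpR).1⟩, mem_filter.2 ⟨hpP, hpa, (hf p hpR).2⟩⟩
    refine (card_le_card hsub).trans ((card_union_le _ _).trans (Nat.add_le_add_left ?_ _))
    refine (card_biUnion_le_card_mul _ _ s fun c hc ↦ ?_).trans ?_
    · exact hA.card_common_le P ha (hR (mem_of_mem_erase hc)) (ne_of_mem_erase hc).symm
    · rw [mul_comm]
      gcongr
      exact erase_subset a R
  calc ∑ a ∈ A, #{p ∈ P | (∃ c ∈ R, p ∈ c.graph) ∧ p ∈ a.graph}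
      ≤ ∑ a ∈ A, (#{p ∈ P | f p = a} + s * #R) := sum_le_sum hcard
    _ = ∑ a ∈ A, #{p ∈ P | f p = a} + s * #R * #A := by
        rw [sum_add_distrib, sum_const, smul_eq_mul, mul_comm (#A)]
    _ ≤ #P + s * #R * #A := by
        gcongr
        exact (sum_card_fiberwise_eq_card_filter P A f).trans_le (card_filter_le _ _)

theorem notMem_graph_of_mem_sentinels {a : Arc} (ha : a ∈ sentinels) (p : Fin 2 → ℝ) :
    p ∉ a.graph := by
  simp only [sentinels, mem_insert, mem_singleton] at ha
  rcases ha with rfl | rfl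
  exacts [fun hp ↦ EReal.coe_ne_bot _ hp.2.symm, fun hp ↦ EReal.coe_ne_top _ hp.2.symm]

theorem card_off_sample_le (P : Finset (Fin 2 → ℝ)) (R : Finset Arc) (a : Arc) :
    #{p ∈ P | (¬∃ c ∈ R, p ∈ c.graph) ∧ p ∈ a.graph} ≤
      ∑ Δ ∈ cells P (R ∪ sentinels), #{p ∈ Δ | p ∈ a.graph} := by
  refine (card_le_card fun p hp ↦ ?_).trans card_biUnion_le
  obtain ⟨hpP, hpR, hpa⟩ := mem_filter.1 hp
  have hoff : ∀ c ∈ R ∪ sentinels, p ∉ c.graph := fun c hc hpc ↦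
    (mem_union.1 hc).elim (fun hc ↦ hpR ⟨c, hc, hpc⟩)
      fun hc ↦ notMem_graph_of_mem_sentinels hc p hpc
  obtain ⟨Δ, hΔ, hpΔ⟩ := exists_mem_cells subset_union_right hpP hoff
  exact mem_biUnion.2 ⟨Δ, hΔ, mem_filter.2 ⟨hpΔ, hpa⟩⟩

variable {k : ℕ} {lam : ℝ}

theorem sum_card_off_sample_le (hlam : 0 < lam)
    (hk : ∀ pts : Finset (Fin 2 → ℝ), #pts = k + 1 → #{a ∈ A | ∀ p ∈ pts, p ∈ a.graph} ≤ s)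
    (P : Finset (Fin 2 → ℝ)) (R : Finset Arc) :
    ∑ a ∈ A, (#{p ∈ P | (¬∃ c ∈ R, p ∈ c.graph) ∧ p ∈ a.graph} : ℝ) ≤
      ∑ a ∈ A, ∑ Δ ∈ cells P (R ∪ sentinels) with a.Crosses Δ, (k + #Δ / lam) +
        s * lam ^ k * #P := by
  have hcell : ∀ Δ : Finset (Fin 2 → ℝ), ∑ a ∈ A, (#{p ∈ Δ | p ∈ a.graph} : ℝ) ≤
      (k + #Δ / lam) * #{a ∈ A | a.Crosses Δ} + s * lam ^ k * #Δ := by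
    intro Δ
    have hconflict : ∑ a ∈ A with a.Crosses Δ, (#{p ∈ Δ | p ∈ a.graph} : ℝ) =
        ∑ a ∈ A, (#{p ∈ Δ | p ∈ a.graph} : ℝ) := sum_filter_of_ne fun a _ hne ↦ by
      obtain ⟨p, hp⟩ := card_ne_zero.1 (Nat.cast_ne_zero.1 hne)
      exact ⟨p, mem_filter.1 hp⟩
    rw [← hconflict]
    exact sum_card_le_of_forall_card_le hlam fun pts _ hpts ↦
      (card_le_card (filter_subset_filter _ (filter_subset _ A))).trans (hk pts hpts)
  calc ∑ a ∈ A, (#{p ∈ P | (¬∃ c ∈ R, p ∈ c.graph) ∧ p ∈ a.graph} : ℝ)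
      ≤ ∑ a ∈ A, ∑ Δ ∈ cells P (R ∪ sentinels), (#{p ∈ Δ | p ∈ a.graph} : ℝ) := by
        gcongr with a
        exact_mod_cast card_off_sample_le P R a
    _ = ∑ Δ ∈ cells P (R ∪ sentinels), ∑ a ∈ A, (#{p ∈ Δ | p ∈ a.graph} : ℝ) := sum_comm
    _ ≤ ∑ Δ ∈ cells P (R ∪ sentinels),
          ((k + #Δ / lam) * #{a ∈ A | a.Crosses Δ} + s * lam ^ k * #Δ) := by
        gcongr with Δ
        exact hcell Δ
    _ = ∑ a ∈ A, ∑ Δ ∈ cells P (R ∪ sentinels) with a.Crosses Δ, (k + #Δ / lam) +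
          s * lam ^ k * ((∑ Δ ∈ cells P (R ∪ sentinels), #Δ : ℕ) : ℝ) := by
        rw [sum_add_distrib, ← mul_sum, Nat.cast_sum]
        congr 1
        simp_rw [sum_filter]
        rw [sum_comm]
        simp_rw [← sum_filter, sum_const, nsmul_eq_mul, mul_comm]
    _ ≤ _ := by
        gcongr
        exact sum_card_cells_le P _

theorem IsArcSystem.sum_cells_weight_le (hA : IsArcSystem s t A)
    (hreal : ∀ a ∈ A, ∀ x ∈ a.dom, a x ≠ ⊥ ∧ a x ≠ ⊤) (P : Finset (Fin 2 → ℝ)) {r : ℕ}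
    (hR : R ⊆ A) (hr : #R ≤ r + 1) (hlam : 0 < lam) :
    ∑ Δ ∈ cells P (R ∪ sentinels), ((k : ℝ) + #Δ / lam) ≤
      k * (4 * (s + t + 1) * (r + 3) ^ 2) + #P / lam := by
  have hcard : #(R ∪ sentinels) ≤ r + 3 :=
    (card_union_le _ _).trans <| Nat.add_le_add (d := 2) hr card_le_two
  have hcells : #(cells P (R ∪ sentinels)) ≤ 4 * (s + t + 1) * (r + 3) ^ 2 :=
    ((hA.mono hR).union_sentinels fun a ha ↦ hreal a (hR ha)).card_cells_le P |>.trans (by gcongr)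
  calc ∑ Δ ∈ cells P (R ∪ sentinels), ((k : ℝ) + #Δ / lam)
      = k * #(cells P (R ∪ sentinels)) +
          ((∑ Δ ∈ cells P (R ∪ sentinels), #Δ : ℕ) : ℝ) / lam := by
        rw [sum_add_distrib, sum_const, nsmul_eq_mul, mul_comm, ← sum_div, Nat.cast_sum]
    _ ≤ k * (4 * (s + t + 1) * (r + 3) ^ 2 : ℕ) + #P / lam := by
        gcongr
        exact sum_card_cells_le P _
    _ = _ := by push_cast; rfl

theorem IsArcSystem.sum_card_incidences_le (hA : IsArcSystem s t A)
    (hreal : ∀ a ∈ A, ∀ x ∈ a.dom, a x ≠ ⊥ ∧ a x ≠ ⊤)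
    (hk : ∀ pts : Finset (Fin 2 → ℝ), #pts = k + 1 → #{a ∈ A | ∀ p ∈ pts, p ∈ a.graph} ≤ s)
    (P : Finset (Fin 2 → ℝ)) (r : ℕ) (hlam : 0 < lam) :
    ∑ a ∈ A, (#{p ∈ P | p ∈ a.graph} : ℝ) ≤ #P + s * r * #A + s * lam ^ k * #P +
      2 ^ 5 * (k * (4 * (s + t + 1) * (r + 3) ^ 2) + #P / lam) * #A / (r + 1) := by
  have hsplit : ∀ R : Finset Arc, ∑ a ∈ A, (#{p ∈ P | p ∈ a.graph} : ℝ) =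
      (∑ a ∈ A, #{p ∈ P | (∃ c ∈ R, p ∈ c.graph) ∧ p ∈ a.graph} : ℕ) +
        ∑ a ∈ A, (#{p ∈ P | (¬∃ c ∈ R, p ∈ c.graph) ∧ p ∈ a.graph} : ℝ) := by
    intro R
    rw [Nat.cast_sum, ← sum_add_distrib]
    refine sum_congr rfl fun a _ ↦ ?_
    rw [← card_filter_add_card_filter_not fun p ↦ ∃ c ∈ R, p ∈ c.graph, filter_filter,
      filter_filter, Nat.cast_add]
    simp_rw [and_comm]
  have hon : ∀ R ⊆ A, ((∑ a ∈ A, #{p ∈ P | (∃ c ∈ R, p ∈ c.graph) ∧ p ∈ a.graph} : ℕ) : ℝ) ≤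
      #P + s * #R * #A := fun R hR ↦ by exact_mod_cast hA.sum_card_on_sample_le hR P
  rcases le_or_gt #A r with hr | hr
  · have hoff : ∑ a ∈ A, (#{p ∈ P | (¬∃ c ∈ A, p ∈ c.graph) ∧ p ∈ a.graph} : ℝ) = 0 :=
      sum_eq_zero fun a ha ↦ Nat.cast_eq_zero.2 <| card_eq_zero.2 <|
        filter_eq_empty_iff.2 fun p _ h ↦ h.1 ⟨a, ha, h.2⟩
    rw [hsplit A, hoff, add_zero, add_assoc]
    refine (hon A subset_rfl).trans (le_add_of_le_of_nonneg ?_ (by positivity))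
    gcongr
  · obtain ⟨R, hRA, hRr, hsample⟩ :=
      ((isConfigurationSpace_cells P).union_right sentinels).exists_sample
        (w := fun Δ ↦ k + #Δ / lam) (fun Δ ↦ by positivity) hr fun R hRA hRr ↦
        hA.sum_cells_weight_le hreal P hRA hRr hlam
    have := hon R hRA
    rw [hRr] at this
    rw [hsplit R]
    linarith [sum_card_off_sample_le hlam hk P R]

end ArcIncidences

section Balance

/-- The Pach–Sharir bound, up to a constant factor, for `m` points and `n` curves with `k` degrees
of freedom. -/
def incidenceBound (k : ℕ) (m n : ℝ) : ℝ :=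
  m ^ ((k : ℝ) / (2 * k - 1)) * n ^ ((2 * k - 2 : ℝ) / (2 * k - 1)) + m + n

variable {k : ℕ} {m n : ℝ}

theorem le_incidenceBound (k : ℕ) (hm : 0 ≤ m) (hn : 0 ≤ n) :
    m ^ ((k : ℝ) / (2 * k - 1)) * n ^ ((2 * k - 2 : ℝ) / (2 * k - 1)) ≤ incidenceBound k m n ∧
      m ≤ incidenceBound k m n ∧ n ≤ incidenceBound k m n := by
  have : 0 ≤ m ^ ((k : ℝ) / (2 * k - 1)) * n ^ ((2 * k - 2 : ℝ) / (2 * k - 1)) := by positivity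
  unfold incidenceBound
  exact ⟨by linarith, by linarith, by linarith⟩

theorem incidenceBound_le_mul (hk : 1 ≤ k) (hm : 0 ≤ m) (hn : 0 ≤ n) {n' M : ℝ} (hn' : 0 ≤ n')
    (hM : 1 ≤ M) (h : n' ≤ M * n) : incidenceBound k m n' ≤ M * incidenceBound k m n := by
  have hk' : (1 : ℝ) ≤ k := by exact_mod_cast hk
  have he₀ : 0 ≤ (2 * k - 2 : ℝ) / (2 * k - 1) := div_nonneg (by linarith) (by linarith)
  have he₁ : (2 * k - 2 : ℝ) / (2 * k - 1) ≤ 1 := div_le_one_of_le₀ (by linarith) (by linarith)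
  unfold incidenceBound
  rw [mul_add, mul_add]
  refine add_le_add (add_le_add ?_ (le_mul_of_one_le_left hm hM)) h
  calc m ^ ((k : ℝ) / (2 * k - 1)) * n' ^ ((2 * k - 2 : ℝ) / (2 * k - 1))
      ≤ m ^ ((k : ℝ) / (2 * k - 1)) * (M * n) ^ ((2 * k - 2 : ℝ) / (2 * k - 1)) := by gcongr
    _ = M ^ ((2 * k - 2 : ℝ) / (2 * k - 1)) *
          (m ^ ((k : ℝ) / (2 * k - 1)) * n ^ ((2 * k - 2 : ℝ) / (2 * k - 1))) := by
        rw [Real.mul_rpow (by linarith) hn]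
        ring
    _ ≤ M * (m ^ ((k : ℝ) / (2 * k - 1)) * n ^ ((2 * k - 2 : ℝ) / (2 * k - 1))) := by
        gcongr
        exact Real.rpow_le_self_of_one_le hM he₁

theorem exists_pow_eq {d : ℕ} (hd : d ≠ 0) {x : ℝ} (hx : 0 < x) :
    ∃ u > 0, x = u ^ d ∧ ∀ j : ℕ, x ^ ((j : ℝ) / d) = u ^ j := by
  refine ⟨x ^ (d : ℝ)⁻¹, by positivity, (Real.rpow_inv_natCast_pow hx.le hd).symm, fun j ↦ ?_⟩
  rw [← Real.rpow_natCast, ← Real.rpow_mul hx.le, inv_mul_eq_div]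

theorem exists_sample_size (k : ℕ) (hm : 0 < m) (hn : 0 < n) :
    ∃ (r : ℕ) (lam : ℝ), 0 < lam ∧ (r + 1) * n ≤ 2 * incidenceBound (k + 1) m n ∧
      lam ^ k * m ≤ incidenceBound (k + 1) m n ∧
      m / lam * n / (r + 1) ≤ incidenceBound (k + 1) m n := by
  obtain ⟨u, hu, hm_eq, hmu⟩ := exists_pow_eq (d := 2 * k + 1) (by omega) hm
  obtain ⟨v, hv, hn_eq, hnv⟩ := exists_pow_eq (d := 2 * k + 1) (by omega) hn
  obtain ⟨hM, -, hnB⟩ := le_incidenceBound (k + 1) hm.le hn.le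
  have hM_eq : m ^ (((k + 1 : ℕ) : ℝ) / (2 * (k + 1 : ℕ) - 1)) *
      n ^ ((2 * (k + 1 : ℕ) - 2 : ℝ) / (2 * (k + 1 : ℕ) - 1)) = u ^ (k + 1) * v ^ (2 * k) := by
    rw [← hmu, ← hnv]
    push_cast
    ring_nf
  rw [hM_eq] at hM
  set B := incidenceBound (k + 1) m n
  refine ⟨⌊B / n⌋₊, v ^ 2 / u, by positivity, ?_, ?_, ?_⟩
  · have hfloor : (⌊B / n⌋₊ : ℝ) * n ≤ B :=
      (le_div_iff₀ hn).1 (Nat.floor_le (div_nonneg (hn.le.trans hnB) hn.le))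
    linarith
  · refine hM.trans_eq' ?_
    rw [hm_eq, div_pow]
    field_simp
    ring
  · have hceil : B < (⌊B / n⌋₊ + 1) * n := (div_lt_iff₀ hn).1 (Nat.lt_floor_add_one _)
    have hsq : m / (v ^ 2 / u) * n * n = (u ^ (k + 1) * v ^ (2 * k)) ^ 2 := by
      rw [hm_eq, hn_eq]
      field_simp
      ring
    rw [div_le_iff₀ (by positivity)]
    refine le_of_mul_le_mul_right ?_ hn
    calc m / (v ^ 2 / u) * n * n = (u ^ (k + 1) * v ^ (2 * k)) ^ 2 := hsq
      _ ≤ B ^ 2 := by gcongr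
      _ = B * B := sq B
      _ ≤ B * ((⌊B / n⌋₊ + 1) * n) := by gcongr; exact hn.le.trans hnB
      _ = B * (⌊B / n⌋₊ + 1) * n := by ring

end Balance

section ArcIncidenceBound

theorem IsArcSystem.exists_sum_card_incidences_le (k s t : ℕ) :
    ∃ c : ℝ, 0 < c ∧ ∀ (A : Finset Arc) (P : Finset (Fin 2 → ℝ)), IsArcSystem s t A →
      (∀ a ∈ A, ∀ x ∈ a.dom, a x ≠ ⊥ ∧ a x ≠ ⊤) →
      (∀ pts : Finset (Fin 2 → ℝ), #pts = k + 1 → #{a ∈ A | ∀ p ∈ pts, p ∈ a.graph} ≤ s) →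
      ∑ a ∈ A, (#{p ∈ P | p ∈ a.graph} : ℝ) ≤ c * incidenceBound (k + 1) #P #A := by
  refine ⟨1 + 2 * s + s + 2 ^ 5 * (72 * k * (s + t + 1) + 1), by positivity, ?_⟩
  intro A P hA hreal hk
  set B := incidenceBound (k + 1) #P #A with hB
  obtain ⟨-, hPB, -⟩ := le_incidenceBound (k + 1) (#P).cast_nonneg (#A).cast_nonneg
  have hB0 : 0 ≤ B := (#P).cast_nonneg.trans hPB
  rcases P.eq_empty_or_nonempty with rfl | hP
  · simp only [filter_empty, card_empty, Nat.cast_zero, sum_const_zero]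
    positivity
  rcases A.eq_empty_or_nonempty with rfl | hA'
  · rw [sum_empty]
    positivity
  obtain ⟨r, lam, hlam, hrB, hlamB, hdivB⟩ :=
    exists_sample_size k (Nat.cast_pos.2 hP.card_pos) (Nat.cast_pos.2 hA'.card_pos)
  rw [← hB] at hPB hrB hlamB hdivB
  have hr3 : ((r : ℝ) + 3) ^ 2 / (r + 1) ≤ 9 * (r + 1) := by
    rw [div_le_iff₀ (by positivity)]
    nlinarith [(r.cast_nonneg : (0 : ℝ) ≤ r)]
  calc ∑ a ∈ A, (#{p ∈ P | p ∈ a.graph} : ℝ)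
      ≤ #P + s * r * #A + s * lam ^ k * #P +
          2 ^ 5 * (k * (4 * (s + t + 1) * (r + 3) ^ 2) + #P / lam) * #A / (r + 1) :=
        hA.sum_card_incidences_le hreal hk P r hlam
    _ = #P + s * (r * #A) + s * (lam ^ k * #P) + 2 ^ 5 * (k * (4 * (s + t + 1)) *
          (((r : ℝ) + 3) ^ 2 / (r + 1) * #A) + #P / lam * #A / (r + 1)) := by ring
    _ ≤ #P + s * ((r + 1) * #A) + s * (lam ^ k * #P) + 2 ^ 5 * (k * (4 * (s + t + 1)) *
          (9 * (r + 1) * #A) + #P / lam * #A / (r + 1)) := by gcongr; linarith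
    _ = #P + s * ((r + 1) * #A) + s * (lam ^ k * #P) + 2 ^ 5 * (36 * k * (s + t + 1) *
          ((r + 1) * #A) + #P / lam * #A / (r + 1)) := by ring
    _ ≤ B + s * (2 * B) + s * B + 2 ^ 5 * (36 * k * (s + t + 1) * (2 * B) + B) := by gcongr
    _ = _ := by ring

end ArcIncidenceBound

open Polynomial

section Discriminant

variable {R : Type*} [CommRing R] [IsDomain R]

section FractionField

variable [NormalizedGCDMonoid R] {K : Type*} [Field K] [Algebra R K] [IsFractionRing R K]

theorem exists_isPrimitive_associated_map {q : K[X]} (hq : q ≠ 0) :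
    ∃ p : R[X], p.IsPrimitive ∧ Associated (p.map (algebraMap R K)) q := by
  have hinj : Function.Injective (algebraMap R K) := IsFractionRing.injective R K
  have associated_C_mul {a : R} (ha : a ≠ 0) (f : K[X]) :
      Associated (C (algebraMap R K a) * f) f :=
    associated_unit_mul_left _ _
      (isUnit_C.2 ((map_ne_zero_iff _ hinj).2 ha).isUnit)
  set q₀ := IsLocalization.integerNormalization (nonZeroDivisors R) q
  obtain ⟨b, hb_mem, hb⟩ := IsLocalization.integerNormalization_spec (nonZeroDivisors R) q
  have hq₀ : q₀ ≠ 0 := mt IsFractionRing.integerNormalization_eq_zero_iff.1 hq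
  have hmap : C (algebraMap R K q₀.content) * q₀.primPart.map (algebraMap R K) =
      C (algebraMap R K b) * q := by
    rw [← map_C, ← Polynomial.map_mul, ← q₀.eq_C_content_mul_primPart, hb, Algebra.smul_def]
    rfl
  refine ⟨q₀.primPart, q₀.isPrimitive_primPart, ?_⟩
  exact (associated_C_mul (mt content_eq_zero_iff.1 hq₀) _).symm.trans
    (hmap ▸ associated_C_mul (nonZeroDivisors.ne_zero hb_mem) q)

theorem squarefree_map_algebraMap {p : R[X]} (hp : Squarefree p) :
    Squarefree (p.map (algebraMap R K)) := by
  intro q hq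
  have hp₀ : p.map (algebraMap R K) ≠ 0 :=
    (Polynomial.map_ne_zero_iff (IsFractionRing.injective R K)).2 hp.ne_zero
  have hq₀ : q ≠ 0 := by
    rintro rfl
    exact hp₀ (by simpa using hq)
  obtain ⟨r, hr, hrq⟩ := exists_isPrimitive_associated_map (R := R) hq₀
  have hdvd : (r * r).map (algebraMap R K) ∣ p.map (algebraMap R K) := by
    rw [Polynomial.map_mul]
    exact (hrq.mul_mul hrq).dvd.trans hq
  have hunit := hp r ((hr.mul hr).dvd_of_fraction_map_dvd_fraction_map hdvd)
  exact hrq.isUnit_iff.1 (hunit.map (mapRingHom (algebraMap R K)))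

end FractionField

theorem resultant_derivative_ne_zero [UniqueFactorizationMonoid R] [CharZero R] {p : R[X]}
    (hp : Squarefree p) : resultant p (derivative p) ≠ 0 := by
  let _ : StrongNormalizationMonoid R := UniqueFactorizationMonoid.strongNormalizationMonoid
  let _ : NormalizedGCDMonoid R := UniqueFactorizationMonoid.toNormalizedGCDMonoid R
  let K := FractionRing R
  have hinj : Function.Injective (algebraMap R K) := IsFractionRing.injective R K
  have : CharZero K := charZero_of_injective_algebraMap hinj
  have hsep : (p.map (algebraMap R K)).Separable :=
    PerfectField.separable_iff_squarefree.2 (squarefree_map_algebraMap hp)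
  have hres := resultant_ne_zero _ _ hsep
  rw [derivative_map, natDegree_map_eq_of_injective hinj, natDegree_map_eq_of_injective hinj,
    resultant_map_map] at hres
  exact fun h ↦ hres (by rw [h, map_zero])

end Discriminant

section DegreeBounds

variable {R : Type*} [CommRing R] {d : ℕ}

theorem natDegree_det_le {ι : Type*} [Fintype ι] [DecidableEq ι] (M : Matrix ι ι R[X])
    (hM : ∀ i j, (M i j).natDegree ≤ d) : M.det.natDegree ≤ Fintype.card ι * d := by
  rw [Matrix.det_apply]
  refine natDegree_sum_le_of_forall_le _ _ fun σ _ ↦ (natDegree_smul_le _ _).trans ?_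
  refine (natDegree_prod_le _ _).trans ((Finset.sum_le_card_nsmul _ _ d fun i _ ↦ hM _ _).trans ?_)
  simp

theorem natDegree_resultant_le {p q : R[X][X]} (m n : ℕ) (hp : ∀ i, (p.coeff i).natDegree ≤ d)
    (hq : ∀ i, (q.coeff i).natDegree ≤ d) : (resultant p q m n).natDegree ≤ (m + n) * d := by
  refine (natDegree_det_le (d := d) _ fun i j ↦ ?_).trans (by rw [Fintype.card_fin])
  rw [sylvester, Matrix.of_apply]
  refine Fin.addCases (fun j ↦ ?_) (fun j ↦ ?_) j
  · rw [Fin.addCases_left]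
    split_ifs
    exacts [hq _, by simp]
  · rw [Fin.addCases_right]
    split_ifs
    exacts [hp _, by simp]

theorem natDegree_coeff_derivative_le {p : R[X][X]} (hp : ∀ i, (p.coeff i).natDegree ≤ d) (i : ℕ) :
    ((derivative p).coeff i).natDegree ≤ d := by
  rw [coeff_derivative, ← Nat.cast_succ]
  exact natDegree_mul_le.trans (by rw [natDegree_natCast, add_zero]; exact hp _)

end DegreeBounds

section SimpleFiber

variable {K : Type*} [Field K] {G : K[X][X]} {x : K}

/-- The vertical line at abscissa `x` meets the curve `G = 0` only in simple, hence transversal,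
points, and no root of `G (x, ·)` escapes to infinity as the abscissa tends to `x`. -/
def HasSimpleFiber (G : K[X][X]) (x : K) : Prop :=
  G.leadingCoeff.eval x ≠ 0 ∧ ∀ y, evalEval x y G = 0 → evalEval x y (derivative G) ≠ 0

theorem hasSimpleFiber_of_natDegree_eq_zero (hG : G.natDegree = 0)
    (hx : G.leadingCoeff.eval x ≠ 0) : HasSimpleFiber G x := by
  refine ⟨hx, fun y hy ↦ absurd hy ?_⟩
  rwa [eq_C_of_natDegree_eq_zero hG, evalEval_C, ← hG]

theorem hasSimpleFiber_of_eval_resultant_ne_zero (hlc : G.leadingCoeff.eval x ≠ 0)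
    (hres : (resultant G (derivative G)).eval x ≠ 0) : HasSimpleFiber G x := by
  by_cases hG : G.natDegree = 0
  · exact hasSimpleFiber_of_natDegree_eq_zero hG hlc
  refine ⟨hlc, fun y hy hy' ↦ hres ?_⟩
  obtain ⟨a, b, -, -, hbezout⟩ :=
    exists_mul_add_mul_eq_C_resultant G (derivative G) le_rfl le_rfl (Or.inl hG)
  simpa [evalEval_add, evalEval_mul, hy, hy', evalEval_C] using
    (congrArg (evalEval x y) hbezout).symm

theorem exists_finset_hasSimpleFiber [CharZero K] {d : ℕ} (hG : Squarefree G)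
    (hdeg : G.natDegree ≤ d) (hcoeff : ∀ i, (G.coeff i).natDegree ≤ d) :
    ∃ X : Finset K, #X ≤ 2 * d ^ 2 + d ∧ ∀ x ∉ X, HasSimpleFiber G x := by
  set D := resultant G (derivative G) * G.leadingCoeff
  have hD : D ≠ 0 :=
    mul_ne_zero (resultant_derivative_ne_zero hG) (leadingCoeff_ne_zero.2 hG.ne_zero)
  have hdeg' : (derivative G).natDegree ≤ d := (natDegree_derivative_le G).trans (by omega)
  have hDdeg : D.natDegree ≤ 2 * d ^ 2 + d := calc
    D.natDegree ≤ (G.natDegree + (derivative G).natDegree) * d + d :=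
      natDegree_mul_le.trans (add_le_add
        (natDegree_resultant_le _ _ hcoeff (natDegree_coeff_derivative_le hcoeff)) (hcoeff _))
    _ ≤ (d + d) * d + d := by gcongr
    _ = 2 * d ^ 2 + d := by ring
  refine ⟨D.roots.toFinset, (Multiset.toFinset_card_le _).trans ((card_roots' D).trans hDdeg),
    fun x hx ↦ ?_⟩
  have hDx : D.eval x ≠ 0 := fun h ↦ hx (Multiset.mem_toFinset.2 ((mem_roots hD).2 h))
  rw [eval_mul] at hDx
  exact hasSimpleFiber_of_eval_resultant_ne_zero (right_ne_zero_of_mul hDx)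
    (left_ne_zero_of_mul hDx)

end SimpleFiber

section CurvePolynomial

theorem exists_squarefree_zeroSet_eq {n : ℕ} {f : MvPolynomial (Fin n) ℝ} (hf : f ≠ 0) :
    ∃ g : MvPolynomial (Fin n) ℝ,
      Squarefree g ∧ g.totalDegree ≤ f.totalDegree ∧ zeroSet g = zeroSet f := by
  induction hd : f.totalDegree using Nat.strong_induction_on generalizing f with
  | _ d ih =>
    subst hd
    by_cases hsq : Squarefree f
    · exact ⟨f, hsq, le_rfl, rfl⟩
    obtain ⟨q, ⟨h, rfl⟩, hq⟩ : ∃ q, q * q ∣ f ∧ ¬IsUnit q := by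
      simpa only [Squarefree, not_forall, exists_prop] using hsq
    have hqh : q * h ≠ 0 := fun h₀ ↦ hf (by rw [mul_assoc, h₀, mul_zero])
    have hq₀ : q ≠ 0 := left_ne_zero_of_mul hqh
    have hqdeg : 0 < q.totalDegree := by
      rw [pos_iff_ne_zero, Ne, MvPolynomial.totalDegree_eq_zero_iff_eq_C]
      intro hC
      rw [hC] at hq hq₀
      exact hq ((isUnit_iff_ne_zero.2 fun h₀ ↦ hq₀ (by rw [h₀, map_zero])).map MvPolynomial.C)
    have hdeg : (q * q * h).totalDegree = q.totalDegree + (q * h).totalDegree := by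
      rw [mul_assoc, MvPolynomial.totalDegree_mul_of_isDomain hq₀ hqh]
    obtain ⟨g, hg, hgdeg, hgq⟩ := ih _ (by omega) hqh rfl
    refine ⟨g, hg, by omega, hgq.trans ?_⟩
    ext x
    simp [zeroSet]

variable {R : Type*} [CommRing R] (f : MvPolynomial (Fin 2) R)

theorem equivMvPolynomial_symm_eq_sum :
    (Bivariate.equivMvPolynomial R).symm f =
      ∑ m ∈ f.support, C (C (f.coeff m) * X ^ m 0) * X ^ m 1 := by
  conv_lhs => rw [f.as_sum, map_sum]
  refine Finset.sum_congr rfl fun m _ ↦ ?_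
  rw [MvPolynomial.monomial_eq, Finsupp.prod_fintype _ _ (by simp)]
  simp [Fin.prod_univ_two, mul_assoc]

theorem evalEval_equivMvPolynomial_symm (p : Fin 2 → R) :
    evalEval (p 0) (p 1) ((Bivariate.equivMvPolynomial R).symm f) = MvPolynomial.eval p f := by
  rw [equivMvPolynomial_symm_eq_sum, MvPolynomial.eval_eq', evalEval_finsetSum]
  simp [Fin.prod_univ_two, evalEval_mul, evalEval_pow, evalEval_C, mul_assoc]

variable {f} in
theorem apply_add_apply_le_totalDegree {m : Fin 2 →₀ ℕ} (hm : m ∈ f.support) :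
    m 0 + m 1 ≤ f.totalDegree := by
  simpa [Finsupp.sum_fintype] using MvPolynomial.le_totalDegree hm

theorem natDegree_equivMvPolynomial_symm_le :
    ((Bivariate.equivMvPolynomial R).symm f).natDegree ≤ f.totalDegree := by
  rw [equivMvPolynomial_symm_eq_sum]
  refine natDegree_sum_le_of_forall_le _ _ fun m hm ↦ (natDegree_C_mul_X_pow_le _ _).trans ?_
  exact (Nat.le_add_left _ _).trans (apply_add_apply_le_totalDegree hm)

theorem natDegree_coeff_equivMvPolynomial_symm_le (i : ℕ) :
    (((Bivariate.equivMvPolynomial R).symm f).coeff i).natDegree ≤ f.totalDegree := by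
  rw [equivMvPolynomial_symm_eq_sum, finsetSum_coeff]
  refine natDegree_sum_le_of_forall_le _ _ fun m hm ↦ ?_
  rw [coeff_C_mul_X_pow]
  split_ifs
  · exact (natDegree_C_mul_X_pow_le _ _).trans
      ((Nat.le_add_right _ _).trans (apply_add_apply_le_totalDegree hm))
  · simp

theorem IsPlaneAlgCurve.exists_squarefree_bivariate {d : ℕ} {γ : Set (Fin 2 → ℝ)}
    (hγ : IsPlaneAlgCurve d γ) :
    ∃ G : ℝ[X][X], Squarefree G ∧ G.natDegree ≤ d ∧ (∀ i, (G.coeff i).natDegree ≤ d) ∧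
      ∀ p, p ∈ γ ↔ evalEval (p 0) (p 1) G = 0 := by
  obtain ⟨f₀, hf₀, hdeg₀, rfl⟩ := hγ
  obtain ⟨f, hf, hdeg, hzero⟩ := exists_squarefree_zeroSet_eq hf₀
  refine ⟨(Bivariate.equivMvPolynomial ℝ).symm f, fun q hq ↦ ?_,
    (natDegree_equivMvPolynomial_symm_le f).trans (hdeg.trans hdeg₀),
    fun i ↦ (natDegree_coeff_equivMvPolynomial_symm_le f i).trans (hdeg.trans hdeg₀), fun p ↦ ?_⟩
  · have hdvd := map_dvd (Bivariate.equivMvPolynomial ℝ) hq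
    rw [map_mul, AlgEquiv.apply_symm_apply] at hdvd
    exact (isUnit_map_iff (Bivariate.equivMvPolynomial ℝ) q).1 (hf _ hdvd)
  · rw [← hzero, evalEval_equivMvPolynomial_symm]
    rfl

end CurvePolynomial

section NthElement

variable {Y : Type*} [LinearOrder Y] [Inhabited Y] {S T : Finset Y} {i j : ℕ}

/-- The `i`-th smallest element of `T`, counting from zero; `default` if `T` is too small. -/
def nthElement (T : Finset Y) (i : ℕ) : Y :=
  if h : i < #T then T.orderEmbOfFin rfl ⟨i, h⟩ else default

theorem nthElement_of_lt (h : i < #T) : nthElement T i = T.orderEmbOfFin rfl ⟨i, h⟩ :=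
  dif_pos h

theorem nthElement_mem (h : i < #T) : nthElement T i ∈ T := by
  rw [nthElement_of_lt h]
  exact orderEmbOfFin_mem _ _ _

theorem exists_nthElement_eq {y : Y} (hy : y ∈ T) : ∃ i < #T, nthElement T i = y := by
  obtain ⟨⟨i, hi⟩, rfl⟩ : y ∈ Set.range (T.orderEmbOfFin rfl) := by
    rwa [range_orderEmbOfFin]
  exact ⟨i, hi, nthElement_of_lt hi⟩

theorem nthElement_inj (hi : i < #T) (hj : j < #T) : nthElement T i = nthElement T j ↔ i = j := by
  rw [nthElement_of_lt hi, nthElement_of_lt hj, (T.orderEmbOfFin rfl).injective.eq_iff,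
    Fin.mk_eq_mk]

theorem nthElement_image {f : Y → Y} (hf : StrictMonoOn f S) (hi : i < #S) :
    nthElement (S.image f) i = f (nthElement S i) := by
  have hcard : #(S.image f) = #S := card_image_of_injOn hf.injOn
  have hunique := orderEmbOfFin_unique (s := S.image f) rfl
    (f := fun j ↦ f (S.orderEmbOfFin rfl (Fin.cast hcard j)))
    (fun _ ↦ mem_image_of_mem _ (orderEmbOfFin_mem _ _ _))
    (fun _ _ h ↦ hf (orderEmbOfFin_mem _ _ _) (orderEmbOfFin_mem _ _ _)
      ((S.orderEmbOfFin rfl).strictMono h))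
  rw [nthElement_of_lt (hcard ▸ hi), nthElement_of_lt hi, ← hunique]
  rfl

end NthElement

section ContinuousBranches

variable {X Y : Type*} [TopologicalSpace X] [LinearOrder Y] [TopologicalSpace Y]
  {S : X → Finset Y} {x₀ : X}

/-- Near `x₀` the finite sets `S x` consist of the values of finitely many functions which are
continuous at `x₀`, one through each element of `S x₀`. -/
def HasContinuousBranchesAt (S : X → Finset Y) (x₀ : X) : Prop :=
  ∃ φ : Y → X → Y, (∀ y ∈ S x₀, ContinuousAt (φ y) x₀ ∧ φ y x₀ = y) ∧
    ∀ᶠ x in 𝓝 x₀, S x = (S x₀).image (φ · x)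

theorem hasContinuousBranchesAt_of_isCompact [Nonempty Y] {K : Set Y} (hK : IsCompact K)
    (hSK : ∀ᶠ x in 𝓝 x₀, ∀ y ∈ S x, y ∈ K)
    (hclosed : ∀ y ∉ S x₀, ∀ᶠ p in 𝓝 (x₀, y), p.2 ∉ S p.1)
    (hbranch : ∀ y ∈ S x₀, ∃ φ : X → Y, ContinuousAt φ x₀ ∧ φ x₀ = y ∧
      ∀ᶠ p in 𝓝 (x₀, y), p.2 ∈ S p.1 ↔ φ p.1 = p.2) :
    HasContinuousBranchesAt S x₀ := by
  choose! φ hcont hval hlocal using hbranch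
  refine ⟨φ, fun y hy ↦ ⟨hcont y hy, hval y hy⟩, ?_⟩
  have hpersist : ∀ᶠ x in 𝓝 x₀, ∀ y ∈ S x₀, φ y x ∈ S x := by
    refine (eventually_all_finset _).2 fun y hy ↦ ?_
    have hgraph : Tendsto (fun x ↦ (x, φ y x)) (𝓝 x₀) (𝓝 (x₀, y)) := by
      simpa only [ContinuousAt, id, hval y hy] using continuousAt_id.prodMk (hcont y hy)
    exact (hgraph.eventually (hlocal y hy)).mono fun x hx ↦ hx.2 rfl
  have hnoNew : ∀ᶠ x in 𝓝 x₀, ∀ z ∈ K, z ∈ S x → ∃ y ∈ S x₀, φ y x = z := by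
    refine hK.eventually_forall_of_forall_eventually fun z _ ↦ ?_
    by_cases hz : z ∈ S x₀
    · exact (hlocal z hz).mono fun p hp hpS ↦ ⟨z, hz, hp.1 hpS⟩
    · exact (hclosed z hz).mono fun p hp hpS ↦ absurd hpS hp
  filter_upwards [hpersist, hnoNew, hSK] with x hx hx' hxK
  ext z
  rw [mem_image]
  exact ⟨fun hz ↦ hx' z (hxK z hz) hz, by rintro ⟨y, hy, rfl⟩; exact hx y hy⟩

variable [OrderClosedTopology Y]

theorem HasContinuousBranchesAt.exists_strictMonoOn (hS : HasContinuousBranchesAt S x₀) :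
    ∃ φ : Y → X → Y, (∀ y ∈ S x₀, ContinuousAt (φ y) x₀ ∧ φ y x₀ = y) ∧
      ∀ᶠ x in 𝓝 x₀, S x = (S x₀).image (φ · x) ∧ StrictMonoOn (φ · x) (S x₀) := by
  obtain ⟨φ, hφ, himage⟩ := hS
  refine ⟨φ, hφ, himage.and ?_⟩
  have hlt : ∀ᶠ x in 𝓝 x₀, ∀ y ∈ S x₀, ∀ z ∈ S x₀, y < z → φ y x < φ z x := by
    refine (eventually_all_finset _).2 fun y hy ↦ (eventually_all_finset _).2 fun z hz ↦ ?_
    refine eventually_imp_distrib_left.2 fun hyz ↦ ?_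
    exact (hφ y hy).1.eventually_lt (hφ z hz).1 (by rwa [(hφ y hy).2, (hφ z hz).2])
  exact hlt.mono fun x hx y hy z hz ↦ hx y hy z hz

theorem HasContinuousBranchesAt.eventually_card_eq (hS : HasContinuousBranchesAt S x₀) :
    ∀ᶠ x in 𝓝 x₀, #(S x) = #(S x₀) := by
  obtain ⟨φ, -, hφ⟩ := hS.exists_strictMonoOn
  exact hφ.mono fun x hx ↦ by rw [hx.1, card_image_of_injOn hx.2.injOn]

theorem HasContinuousBranchesAt.continuousAt_nthElement [Inhabited Y]
    (hS : HasContinuousBranchesAt S x₀) {i : ℕ} (hi : i < #(S x₀)) :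
    ContinuousAt (fun x ↦ nthElement (S x) i) x₀ := by
  obtain ⟨φ, hcont, hφ⟩ := hS.exists_strictMonoOn
  refine (hcont _ (nthElement_mem hi)).1.congr (hφ.mono fun x hx ↦ ?_)
  simp only [hx.1, nthElement_image hx.2 hi]

end ContinuousBranches

section FiberRoots

variable (G : ℝ[X][X]) {x x₀ y y₀ : ℝ}

/-- The ordinates of the points of the curve `G = 0` on the vertical line at abscissa `x`; empty
if the curve contains this line. -/
def fiberRoots (G : ℝ[X][X]) (x : ℝ) : Finset ℝ :=
  (G.map (evalRingHom x)).roots.toFinset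

variable {G} in
theorem mem_fiberRoots :
    y ∈ fiberRoots G x ↔ G.map (evalRingHom x) ≠ 0 ∧ evalEval x y G = 0 := by
  rw [fiberRoots, Multiset.mem_toFinset, mem_roots', IsRoot, map_evalRingHom_eval]

variable {G} in
theorem mem_fiberRoots_of_leadingCoeff (hx : G.leadingCoeff.eval x ≠ 0) :
    y ∈ fiberRoots G x ↔ evalEval x y G = 0 := by
  refine mem_fiberRoots.trans (and_iff_right fun h ↦ hx ?_)
  simpa [coeff_map] using congrArg (coeff · G.natDegree) h

theorem card_fiberRoots_le (x : ℝ) : #(fiberRoots G x) ≤ G.natDegree :=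
  (Multiset.toFinset_card_le _).trans ((card_roots' _).trans natDegree_map_le)

theorem contDiff_evalEval : ContDiff ℝ 1 fun p : ℝ × ℝ ↦ evalEval p.1 p.2 G := by
  induction G using Polynomial.induction_on' with
  | add p q hp hq =>
    simp only [evalEval_add]
    exact hp.add hq
  | monomial n a =>
    simp only [← C_mul_X_pow_eq_monomial, evalEval_mul, evalEval_pow, evalEval_C, evalEval_X]
    exact ((a.contDiff_aeval 1).comp contDiff_fst).mul (contDiff_snd.pow n)

theorem hasDerivAt_evalEval (x y : ℝ) :
    HasDerivAt (fun z ↦ evalEval x z G) (evalEval x y (derivative G)) y := by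
  simp only [← map_evalRingHom_eval, ← derivative_map]
  exact Polynomial.hasDerivAt _ _

variable {G}

theorem exists_continuousAt_root (h : evalEval x₀ y₀ G = 0)
    (h' : evalEval x₀ y₀ (derivative G) ≠ 0) :
    ∃ φ : ℝ → ℝ, ContinuousAt φ x₀ ∧ φ x₀ = y₀ ∧
      ∀ᶠ p in 𝓝 (x₀, y₀), evalEval p.1 p.2 G = 0 ↔ φ p.1 = p.2 := by
  have hG : ContDiffAt ℝ 1 (fun p : ℝ × ℝ ↦ evalEval p.1 p.2 G) (x₀, y₀) :=
    (contDiff_evalEval G).contDiffAt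
  have hpartial : fderiv ℝ (fun p : ℝ × ℝ ↦ evalEval p.1 p.2 G) (x₀, y₀) ∘L .inr ℝ ℝ ℝ =
      ContinuousLinearEquiv.unitsEquivAut ℝ (Units.mk0 _ h') := by
    refine HasFDerivAt.unique
      ((hG.differentiableAt one_ne_zero).hasFDerivAt.comp y₀ (hasFDerivAt_prodMk_right x₀ y₀)) ?_
    convert! (hasDerivAt_evalEval G x₀ y₀).hasFDerivAt using 1
  have hinv : (fderiv ℝ (fun p : ℝ × ℝ ↦ evalEval p.1 p.2 G) (x₀, y₀) ∘L
      .inr ℝ ℝ ℝ).IsInvertible := ⟨_, hpartial.symm⟩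
  refine ⟨hG.implicitFunction one_ne_zero hinv,
    (hG.contDiffAt_implicitFunction one_ne_zero hinv).continuousAt,
    hG.implicitFunction_apply_self one_ne_zero hinv, ?_⟩
  simpa only [h] using hG.eventually_apply_eq_iff_implicitFunction one_ne_zero hinv

theorem exists_eventually_abs_root_le (h : G.leadingCoeff.eval x₀ ≠ 0) :
    ∃ r, ∀ᶠ x in 𝓝 x₀, ∀ y, evalEval x y G = 0 → |y| ≤ r := by
  have hreverse : evalEval x₀ 0 G.reverse ≠ 0 := by
    rwa [evalEval, C_0, ← coeff_zero_eq_eval_zero, coeff_zero_reverse]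
  have hne : ∀ᶠ p in 𝓝 x₀ ×ˢ 𝓝 (0 : ℝ), evalEval p.1 p.2 G.reverse ≠ 0 := by
    rw [← nhds_prod_eq]
    exact (contDiff_evalEval G.reverse).continuous.continuousAt.eventually_ne hreverse
  obtain ⟨P, hP, Q, hQ, hPQ⟩ := eventually_prod_iff.1 hne
  obtain ⟨ε, hε, hball⟩ := Metric.eventually_nhds_iff.1 hQ
  refine ⟨ε⁻¹, hP.mono fun x hx y hy ↦ ?_⟩
  by_contra! hlt
  have hy_pos : 0 < |y| := (inv_pos.2 hε).trans hlt
  let _ : Invertible y := invertibleOfNonzero (abs_pos.1 hy_pos)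
  refine hPQ hx (hball (y := ⅟y) ?_) ?_
  · rw [Real.dist_eq, sub_zero, invOf_eq_inv, abs_inv]
    exact inv_lt_of_inv_lt₀ hε hlt
  · simpa only [eval₂_evalRingHom] using
      (eval₂_reverse_eq_zero_iff (evalRingHom x) y G).2 (by rwa [eval₂_evalRingHom])

theorem HasSimpleFiber.hasContinuousBranchesAt (h : HasSimpleFiber G x₀) :
    HasContinuousBranchesAt (fiberRoots G) x₀ := by
  obtain ⟨hlc, hsimple⟩ := h
  obtain ⟨r, hr⟩ := exists_eventually_abs_root_le hlc
  have hlc' : ∀ᶠ x in 𝓝 x₀, G.leadingCoeff.eval x ≠ 0 :=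
    G.leadingCoeff.continuous.continuousAt.eventually_ne hlc
  refine hasContinuousBranchesAt_of_isCompact (isCompact_Icc (a := -r) (b := r)) ?_ ?_ ?_
  · exact hr.mono fun x hx y hy ↦ abs_le.1 (hx y (mem_fiberRoots.1 hy).2)
  · intro y hy
    rw [mem_fiberRoots_of_leadingCoeff hlc] at hy
    exact ((contDiff_evalEval G).continuous.continuousAt.eventually_ne (x := (x₀, y)) hy).mono
      fun p hp hpG ↦ hp (mem_fiberRoots.1 hpG).2
  · intro y hy
    rw [mem_fiberRoots_of_leadingCoeff hlc] at hy
    obtain ⟨φ, hcont, hval, hφ⟩ := exists_continuousAt_root hy (hsimple y hy)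
    refine ⟨φ, hcont, hval, ?_⟩
    filter_upwards [hφ, continuousAt_fst.eventually hlc'] with p hp hplc
    rw [mem_fiberRoots_of_leadingCoeff hplc, hp]

end FiberRoots

section ArcDecomposition

open Arc

/-- The vertical line at abscissa `x`. -/
def verticalLine (x : ℝ) : Set (Fin 2 → ℝ) := {p | p 0 = x}

/-- Away from the vertical lines at the abscissae in `X`, the set `γ` is the union of the pairwise
disjoint graphs of the arcs in `𝒜`. -/
structure IsArcDecomposition (γ : Set (Fin 2 → ℝ)) (X : Finset ℝ) (𝒜 : Finset Arc) : Prop where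
  graph_subset {a : Arc} (ha : a ∈ 𝒜) : a.graph ⊆ γ
  ne_bot_and_ne_top {a : Arc} (ha : a ∈ 𝒜) (x : ℝ) : a x ≠ ⊥ ∧ a x ≠ ⊤
  dom_nonempty {a : Arc} (ha : a ∈ 𝒜) : a.dom.Nonempty
  frontier_subset {a : Arc} (ha : a ∈ 𝒜) : frontier a.dom ⊆ X
  exists_mem_graph {p : Fin 2 → ℝ} (hp : p ∈ γ) (hpX : p 0 ∉ X) : ∃ a ∈ 𝒜, p ∈ a.graph
  meet_eq_empty {a b : Arc} (ha : a ∈ 𝒜) (hb : b ∈ 𝒜) (hab : a ≠ b) : meet a b = ∅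

variable {G : ℝ[X][X]} {X : Finset ℝ} (hX : ∀ x ∉ X, HasSimpleFiber G x) {i j : ℕ}

include hX in
theorem eventually_notMem_and_card_fiberRoots_eq {x : ℝ} (hx : x ∉ X) :
    ∀ᶠ z in 𝓝 x, z ∉ X ∧ #(fiberRoots G z) = #(fiberRoots G x) :=
  (X.finite_toSet.isClosed.isOpen_compl.eventually_mem hx).and
    (hX x hx).hasContinuousBranchesAt.eventually_card_eq

/-- The arc formed by the `i`-th lowest points of the curve `G = 0` over the abscissae outside the
exceptional set `X`. -/
def rootArc (i : ℕ) : Arc where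
  dom := {x | x ∉ X ∧ i < #(fiberRoots G x)}
  toFun x := (nthElement (fiberRoots G x) i : ℝ)
  isOpen_dom := isOpen_iff_mem_nhds.2 fun _ hx ↦
    (eventually_notMem_and_card_fiberRoots_eq hX hx.1).mono fun _ hz ↦ ⟨hz.1, hz.2 ▸ hx.2⟩
  continuousOn_toFun x hx := (continuous_coe_real_ereal.continuousAt.comp
    ((hX x hx.1).hasContinuousBranchesAt.continuousAt_nthElement hx.2)).continuousWithinAt

theorem mem_graph_rootArc {p : Fin 2 → ℝ} :
    p ∈ (rootArc hX i).graph ↔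
      (p 0 ∉ X ∧ i < #(fiberRoots G (p 0))) ∧ nthElement (fiberRoots G (p 0)) i = p 1 :=
  and_congr_right fun _ ↦ EReal.coe_eq_coe_iff

theorem frontier_dom_rootArc_subset : frontier (rootArc hX i).dom ⊆ X := by
  intro x hx
  by_contra hxX
  rw [(rootArc hX i).isOpen_dom.frontier_eq, Set.mem_sdiff, mem_closure_iff_frequently] at hx
  obtain ⟨z, hz, -, hzcard⟩ :=
    (hx.1.and_eventually (eventually_notMem_and_card_fiberRoots_eq hX hxX)).exists
  exact hx.2 ⟨hxX, hzcard ▸ hz.2⟩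

theorem meet_rootArc_eq_empty (hij : i ≠ j) : meet (rootArc hX i) (rootArc hX j) = ∅ := by
  refine Set.eq_empty_of_forall_notMem fun x ⟨hi, hj, h⟩ ↦ hij ?_
  exact (nthElement_inj hi.2 hj.2).1 (EReal.coe_eq_coe_iff.1 h)

theorem mem_fiberRoots_of_mem_graph_rootArc {p : Fin 2 → ℝ} (hp : p ∈ (rootArc hX i).graph) :
    p 1 ∈ fiberRoots G (p 0) := by
  obtain ⟨⟨-, hcard⟩, h⟩ := (mem_graph_rootArc hX).1 hp
  exact h ▸ nthElement_mem hcard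

theorem exists_mem_graph_rootArc {p : Fin 2 → ℝ} (hp : p 1 ∈ fiberRoots G (p 0))
    (hpX : p 0 ∉ X) : ∃ i < G.natDegree, p ∈ (rootArc hX i).graph := by
  obtain ⟨i, hi, h⟩ := exists_nthElement_eq hp
  exact ⟨i, hi.trans_le (card_fiberRoots_le G _), (mem_graph_rootArc hX).2 ⟨⟨hpX, hi⟩, h⟩⟩

theorem isArcDecomposition_rootArc {γ : Set (Fin 2 → ℝ)}
    (hγ : ∀ p, p ∈ γ ↔ evalEval (p 0) (p 1) G = 0) :
    IsArcDecomposition γ X {a ∈ (range G.natDegree).image (rootArc hX) | a.dom.Nonempty} := by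
  have exists_eq {a : Arc}
      (ha : a ∈ {a ∈ (range G.natDegree).image (rootArc hX) | a.dom.Nonempty}) :
      ∃ i, rootArc hX i = a := by
    obtain ⟨i, -, h⟩ := mem_image.1 (mem_filter.1 ha).1
    exact ⟨i, h⟩
  constructor
  case graph_subset =>
    intro a ha p hp
    obtain ⟨i, rfl⟩ := exists_eq ha
    exact (hγ p).2 (mem_fiberRoots.1 (mem_fiberRoots_of_mem_graph_rootArc hX hp)).2
  case ne_bot_and_ne_top =>
    intro a ha x
    obtain ⟨i, rfl⟩ := exists_eq ha
    exact ⟨EReal.coe_ne_bot _, EReal.coe_ne_top _⟩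
  case dom_nonempty => exact fun ha ↦ (mem_filter.1 ha).2
  case frontier_subset =>
    intro a ha
    obtain ⟨i, rfl⟩ := exists_eq ha
    exact frontier_dom_rootArc_subset hX
  case exists_mem_graph =>
    intro p hp hpX
    have hroot := (mem_fiberRoots_of_leadingCoeff (hX _ hpX).1).2 ((hγ p).1 hp)
    obtain ⟨i, hi, hpi⟩ := exists_mem_graph_rootArc hX hroot hpX
    exact ⟨_, mem_filter.2 ⟨mem_image_of_mem _ (mem_range.2 hi), ⟨p 0, hpi.1⟩⟩, hpi⟩
  case meet_eq_empty =>
    intro a b ha hb hab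
    obtain ⟨i, rfl⟩ := exists_eq ha
    obtain ⟨j, rfl⟩ := exists_eq hb
    exact meet_rootArc_eq_empty hX fun h ↦ hab (h ▸ rfl)

variable {d : ℕ} {γ : Set (Fin 2 → ℝ)}

theorem IsPlaneAlgCurve.exists_isArcDecomposition (hγ : IsPlaneAlgCurve d γ) :
    ∃ X 𝒜, #X ≤ 2 * d ^ 2 + d ∧ #𝒜 ≤ d ∧ IsArcDecomposition γ X 𝒜 := by
  obtain ⟨G, hsq, hdeg, hcoeff, hG⟩ := hγ.exists_squarefree_bivariate
  obtain ⟨X, hXcard, hX⟩ := exists_finset_hasSimpleFiber hsq hdeg hcoeff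
  refine ⟨X, _, hXcard, (card_filter_le _ _).trans ?_, isArcDecomposition_rootArc hX hG⟩
  exact card_image_le.trans ((card_range _).trans_le hdeg)

theorem IsPlaneAlgCurve.verticalLine_subset_or (hγ : IsPlaneAlgCurve d γ) (x : ℝ) :
    verticalLine x ⊆ γ ∨ (γ ∩ verticalLine x).encard ≤ d := by
  obtain ⟨G, -, hdeg, -, hG⟩ := hγ.exists_squarefree_bivariate
  by_cases hx : G.map (evalRingHom x) = 0
  · refine Or.inl ?_
    rintro p rfl
    rw [hG, ← map_evalRingHom_eval, hx, eval_zero]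
  · refine Or.inr ?_
    have hmaps : Set.MapsTo (fun p : Fin 2 → ℝ ↦ p 1) (γ ∩ verticalLine x) (fiberRoots G x) := by
      rintro p ⟨hp, rfl⟩
      exact mem_fiberRoots.2 ⟨hx, (hG p).1 hp⟩
    have hinj : Set.InjOn (fun p : Fin 2 → ℝ ↦ p 1) (γ ∩ verticalLine x) := by
      rintro p ⟨-, rfl⟩ q ⟨-, hq⟩ h
      exact funext (Fin.forall_fin_two.2 ⟨hq.symm, h⟩)
    refine (Set.encard_le_encard_of_injOn hmaps hinj).trans ?_
    rw [Set.encard_coe_eq_coe_finsetCard]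
    exact_mod_cast (card_fiberRoots_le G x).trans hdeg

end ArcDecomposition

section Incidences

open Arc

namespace Arc

variable {a : Arc} (ha : ∀ x, a x ≠ ⊥ ∧ a x ≠ ⊤)

include ha in
theorem vecCons_toReal_mem_graph {x : ℝ} (hx : x ∈ a.dom) : ![x, (a x).toReal] ∈ a.graph :=
  ⟨hx, (EReal.coe_toReal (ha x).2 (ha x).1).symm⟩

include ha in
theorem infinite_graph (hdom : a.dom.Nonempty) : a.graph.Infinite := by
  obtain ⟨x, hx⟩ := hdom
  have hdom_inf : a.dom.Infinite := infinite_of_mem_nhds x (a.isOpen_dom.mem_nhds hx)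
  exact Set.infinite_of_injOn_mapsTo (fun x _ y _ hxy ↦ congrFun hxy 0)
    (fun x hx ↦ vecCons_toReal_mem_graph ha hx) hdom_inf

end Arc

namespace IsArcDecomposition

variable {γ γ₁ γ₂ : Set (Fin 2 → ℝ)} {X X₁ X₂ : Finset ℝ} {𝒜 𝒜₁ 𝒜₂ : Finset Arc} {a b : Arc}

theorem encard_meet_le (h₁ : IsArcDecomposition γ₁ X₁ 𝒜₁) (h₂ : IsArcDecomposition γ₂ X₂ 𝒜₂)
    (ha : a ∈ 𝒜₁) (hb : b ∈ 𝒜₂) : (meet a b).encard ≤ (γ₁ ∩ γ₂).encard := by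
  refine Set.encard_le_encard_of_injOn (f := fun x ↦ ![x, (a x).toReal]) ?_ ?_
  · rintro x ⟨hxa, hxb, hab⟩
    refine ⟨h₁.graph_subset ha (vecCons_toReal_mem_graph (h₁.ne_bot_and_ne_top ha) hxa), ?_⟩
    simp only [hab]
    exact h₂.graph_subset hb (vecCons_toReal_mem_graph (h₂.ne_bot_and_ne_top hb) hxb)
  · exact fun x _ y _ hxy ↦ congrFun hxy 0

theorem disjoint (h₁ : IsArcDecomposition γ₁ X₁ 𝒜₁) (h₂ : IsArcDecomposition γ₂ X₂ 𝒜₂)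
    (hfin : (γ₁ ∩ γ₂).Finite) : Disjoint 𝒜₁ 𝒜₂ := by
  refine disjoint_left.2 fun a ha₁ ha₂ ↦ ?_
  refine infinite_graph (h₁.ne_bot_and_ne_top ha₁) (h₁.dom_nonempty ha₁) (hfin.subset ?_)
  exact Set.subset_inter (h₁.graph_subset ha₁) (h₂.graph_subset ha₂)

theorem eq_of_mem_graph (h : IsArcDecomposition γ X 𝒜) (ha : a ∈ 𝒜) (hb : b ∈ 𝒜) {p : Fin 2 → ℝ}
    (hpa : p ∈ a.graph) (hpb : p ∈ b.graph) : a = b := by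
  by_contra hab
  exact Set.eq_empty_iff_forall_notMem.1 (h.meet_eq_empty ha hb hab) (p 0)
    ⟨hpa.1, hpb.1, hpa.2.trans hpb.2.symm⟩

theorem card_points_le (h : IsArcDecomposition γ X 𝒜) {d : ℕ}
    (hγ : ∀ x, verticalLine x ⊆ γ ∨ (γ ∩ verticalLine x).encard ≤ d) (P : Finset (Fin 2 → ℝ)) :
    #{p ∈ P | p ∈ γ} ≤
      ∑ a ∈ 𝒜, #{p ∈ P | p ∈ a.graph} + #{p ∈ P | verticalLine (p 0) ⊆ γ} + #X * d := by
  have hcover : {p ∈ P | p ∈ γ} ⊆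
      𝒜.biUnion (fun a ↦ {p ∈ P | p ∈ a.graph}) ∪ {p ∈ P | verticalLine (p 0) ⊆ γ} ∪
        {x ∈ X | ¬ verticalLine x ⊆ γ}.biUnion fun x ↦ {p ∈ P | p ∈ γ ∩ verticalLine x} := by
    intro p hp
    obtain ⟨hpP, hpγ⟩ := mem_filter.1 hp
    by_cases hpX : p 0 ∈ X
    · by_cases hline : verticalLine (p 0) ⊆ γ
      · exact mem_union_left _ (mem_union_right _ (mem_filter.2 ⟨hpP, hline⟩))
      · exact mem_union_right _ (mem_biUnion.2
          ⟨p 0, mem_filter.2 ⟨hpX, hline⟩, mem_filter.2 ⟨hpP, hpγ, rfl⟩⟩)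
    · obtain ⟨a, ha, hpa⟩ := h.exists_mem_graph hpγ hpX
      exact mem_union_left _ (mem_union_left _ (mem_biUnion.2 ⟨a, ha, mem_filter.2 ⟨hpP, hpa⟩⟩))
  have hline : ∀ x ∈ {x ∈ X | ¬ verticalLine x ⊆ γ}, #{p ∈ P | p ∈ γ ∩ verticalLine x} ≤ d := by
    intro x hx
    have hle := (hγ x).resolve_left (mem_filter.1 hx).2
    have hsub : (({p ∈ P | p ∈ γ ∩ verticalLine x} : Finset _) : Set (Fin 2 → ℝ)) ⊆
        γ ∩ verticalLine x := fun p hp ↦ (mem_filter.1 hp).2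
    exact_mod_cast (Set.encard_coe_eq_coe_finsetCard _).symm.trans_le
      ((Set.encard_le_encard hsub).trans hle)
  refine (card_le_card hcover).trans ((card_union_le _ _).trans (add_le_add ?_ ?_))
  · exact (card_union_le _ _).trans (add_le_add_left card_biUnion_le _)
  · exact (card_biUnion_le_card_mul _ _ d hline).trans
      (Nat.mul_le_mul_right d (card_filter_le _ _))

end IsArcDecomposition

variable {C : Finset (Set (Fin 2 → ℝ))} {X : Set (Fin 2 → ℝ) → Finset ℝ}
  {𝒜 : Set (Fin 2 → ℝ) → Finset Arc} {s t d : ℕ}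

theorem HasDegreesOfFreedom.encard_inter_le {n k : ℕ} {C : Finset (Set (Fin n → ℝ))}
    (hC : HasDegreesOfFreedom C k s) {γ₁ γ₂ : Set (Fin n → ℝ)} (h₁ : γ₁ ∈ C) (h₂ : γ₂ ∈ C)
    (hne : γ₁ ≠ γ₂) : (γ₁ ∩ γ₂).encard ≤ s :=
  Set.encard_le_coe_iff_finite_ncard_le.2 (hC.2 γ₁ h₁ γ₂ h₂ hne)

theorem isArcSystem_biUnion (h𝒜 : ∀ γ ∈ C, IsArcDecomposition γ (X γ) (𝒜 γ))
    (hX : ∀ γ ∈ C, #(X γ) ≤ t)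
    (hC : ∀ γ₁ ∈ C, ∀ γ₂ ∈ C, γ₁ ≠ γ₂ → (γ₁ ∩ γ₂).encard ≤ s) :
    IsArcSystem s t (C.biUnion 𝒜) where
  encard_meet_le {a b} ha hb hab := by
    obtain ⟨γ₁, h₁, ha⟩ := mem_biUnion.1 ha
    obtain ⟨γ₂, h₂, hb⟩ := mem_biUnion.1 hb
    obtain rfl | hne := eq_or_ne γ₁ γ₂
    · simp only [(h𝒜 γ₁ h₁).meet_eq_empty ha hb hab, Set.encard_empty, zero_le]
    · exact ((h𝒜 γ₁ h₁).encard_meet_le (h𝒜 γ₂ h₂) ha hb).trans (hC γ₁ h₁ γ₂ h₂ hne)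
  encard_frontier_le {a} ha := by
    obtain ⟨γ, hγ, ha⟩ := mem_biUnion.1 ha
    refine (Set.encard_le_encard ((h𝒜 γ hγ).frontier_subset ha)).trans ?_
    rw [Set.encard_coe_eq_coe_finsetCard]
    exact_mod_cast hX γ hγ

theorem card_arcs_through_le (h𝒜 : ∀ γ ∈ C, IsArcDecomposition γ (X γ) (𝒜 γ))
    {pts : Finset (Fin 2 → ℝ)} (hpts : pts.Nonempty) :
    #{a ∈ C.biUnion 𝒜 | ∀ p ∈ pts, p ∈ a.graph} ≤ #{γ ∈ C | ∀ p ∈ pts, p ∈ γ} := by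
  obtain ⟨q, hq⟩ := hpts
  refine card_le_card_of_forall_subsingleton (fun a γ ↦ a ∈ 𝒜 γ) ?_ ?_
  · intro a ha
    obtain ⟨ha, hap⟩ := mem_filter.1 ha
    obtain ⟨γ, hγ, haγ⟩ := mem_biUnion.1 ha
    exact ⟨γ, mem_filter.2 ⟨hγ, fun p hp ↦ (h𝒜 γ hγ).graph_subset haγ (hap p hp)⟩, haγ⟩
  · rintro γ hγ a ⟨ha, haγ⟩ b ⟨hb, hbγ⟩
    exact (h𝒜 γ (mem_filter.1 hγ).1).eq_of_mem_graph haγ hbγ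
      ((mem_filter.1 ha).2 q hq) ((mem_filter.1 hb).2 q hq)

theorem infinite_verticalLine (x : ℝ) : (verticalLine x).Infinite := by
  refine (Set.infinite_range_of_injective (f := fun y : ℝ ↦ ![x, y]) ?_).mono ?_
  · exact fun y z h ↦ congrFun h 1
  · rintro _ ⟨y, rfl⟩
    rfl

theorem sum_card_verticalLine_subset_le
    (hC : ∀ γ₁ ∈ C, ∀ γ₂ ∈ C, γ₁ ≠ γ₂ → (γ₁ ∩ γ₂).Finite) (P : Finset (Fin 2 → ℝ)) :
    ∑ γ ∈ C, #{p ∈ P | verticalLine (p 0) ⊆ γ} ≤ #P := by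
  have hone : ∀ p ∈ P, #{γ ∈ C | verticalLine (p 0) ⊆ γ} ≤ 1 := by
    refine fun p _ ↦ card_le_one.2 fun γ₁ h₁ γ₂ h₂ ↦ ?_
    obtain ⟨h₁, hsub₁⟩ := mem_filter.1 h₁
    obtain ⟨h₂, hsub₂⟩ := mem_filter.1 h₂
    by_contra hne
    exact infinite_verticalLine (p 0)
      ((hC γ₁ h₁ γ₂ h₂ hne).subset (Set.subset_inter hsub₁ hsub₂))
  calc ∑ γ ∈ C, #{p ∈ P | verticalLine (p 0) ⊆ γ}
      = ∑ p ∈ P, #{γ ∈ C | verticalLine (p 0) ⊆ γ} :=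
        (sum_card_bipartiteAbove_eq_sum_card_bipartiteBelow _).symm
    _ ≤ #P := (sum_le_card_nsmul _ _ 1 hone).trans_eq (mul_one _)

theorem incidences_eq_sum_card {n : ℕ} (P : Finset (Fin n → ℝ)) (C : Finset (Set (Fin n → ℝ))) :
    Incidences P C = ∑ γ ∈ C, #{p ∈ P | p ∈ γ} := by
  simp only [Incidences, card_filter, sum_product_right]

theorem incidences_le_sum_arcs_add (h𝒜 : ∀ γ ∈ C, IsArcDecomposition γ (X γ) (𝒜 γ))
    (hX : ∀ γ ∈ C, #(X γ) ≤ t)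
    (hline : ∀ γ ∈ C, ∀ x, verticalLine x ⊆ γ ∨ (γ ∩ verticalLine x).encard ≤ d)
    (hC : ∀ γ₁ ∈ C, ∀ γ₂ ∈ C, γ₁ ≠ γ₂ → (γ₁ ∩ γ₂).Finite) (P : Finset (Fin 2 → ℝ)) :
    Incidences P C ≤ ∑ a ∈ C.biUnion 𝒜, #{p ∈ P | p ∈ a.graph} + #P + #C * (t * d) := by
  have hdisj : (C : Set (Set (Fin 2 → ℝ))).PairwiseDisjoint 𝒜 := fun γ₁ h₁ γ₂ h₂ hne ↦
    (h𝒜 γ₁ h₁).disjoint (h𝒜 γ₂ h₂) (hC γ₁ h₁ γ₂ h₂ hne)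
  calc Incidences P C = ∑ γ ∈ C, #{p ∈ P | p ∈ γ} := incidences_eq_sum_card P C
    _ ≤ ∑ γ ∈ C, (∑ a ∈ 𝒜 γ, #{p ∈ P | p ∈ a.graph} + #{p ∈ P | verticalLine (p 0) ⊆ γ}
          + t * d) := by
        refine sum_le_sum fun γ hγ ↦ ((h𝒜 γ hγ).card_points_le (hline γ hγ) P).trans ?_
        gcongr
        exact hX γ hγ
    _ = ∑ a ∈ C.biUnion 𝒜, #{p ∈ P | p ∈ a.graph}
          + ∑ γ ∈ C, #{p ∈ P | verticalLine (p 0) ⊆ γ} + #C * (t * d) := by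
        rw [sum_add_distrib, sum_add_distrib, sum_biUnion hdisj, sum_const, smul_eq_mul]
    _ ≤ _ := by
        gcongr
        exact sum_card_verticalLine_subset_le hC P

theorem exists_sum_card_arcs_le_incidenceBound (k s t d : ℕ) :
    ∃ c : ℝ, 0 < c ∧ ∀ {C : Finset (Set (Fin 2 → ℝ))} {X : Set (Fin 2 → ℝ) → Finset ℝ}
      {𝒜 : Set (Fin 2 → ℝ) → Finset Arc}, HasDegreesOfFreedom C (k + 1) s →
      (∀ γ ∈ C, IsArcDecomposition γ (X γ) (𝒜 γ)) → (∀ γ ∈ C, #(X γ) ≤ t) →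
      (∀ γ ∈ C, #(𝒜 γ) ≤ d) → ∀ P : Finset (Fin 2 → ℝ),
      ∑ a ∈ C.biUnion 𝒜, (#{p ∈ P | p ∈ a.graph} : ℝ) ≤ c * incidenceBound (k + 1) #P #C := by
  obtain ⟨c, hc, harcs⟩ := IsArcSystem.exists_sum_card_incidences_le k s t
  refine ⟨c * (d + 1), by positivity, fun {C X 𝒜} hdof h𝒜 hX hcard P ↦ ?_⟩
  have hsystem : IsArcSystem s t (C.biUnion 𝒜) :=
    isArcSystem_biUnion h𝒜 hX fun _ h₁ _ h₂ ↦ hdof.encard_inter_le h₁ h₂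
  have hreal : ∀ a ∈ C.biUnion 𝒜, ∀ x ∈ a.dom, a x ≠ ⊥ ∧ a x ≠ ⊤ := by
    intro a ha x _
    obtain ⟨γ, hγ, haγ⟩ := mem_biUnion.1 ha
    exact (h𝒜 γ hγ).ne_bot_and_ne_top haγ x
  have hthrough : ∀ pts : Finset (Fin 2 → ℝ), #pts = k + 1 →
      #{a ∈ C.biUnion 𝒜 | ∀ p ∈ pts, p ∈ a.graph} ≤ s := fun pts hpts ↦
    (card_arcs_through_le h𝒜 (card_pos.1 (hpts ▸ k.succ_pos))).trans (hdof.1 pts hpts)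
  have hcard' : (#(C.biUnion 𝒜) : ℝ) ≤ (d + 1) * #C := by
    exact_mod_cast (card_biUnion_le_card_mul C 𝒜 d hcard).trans (by nlinarith)
  calc ∑ a ∈ C.biUnion 𝒜, (#{p ∈ P | p ∈ a.graph} : ℝ)
      ≤ c * incidenceBound (k + 1) #P #(C.biUnion 𝒜) := harcs _ P hsystem hreal hthrough
    _ ≤ c * ((d + 1) * incidenceBound (k + 1) #P #C) := by
        gcongr
        exact incidenceBound_le_mul k.succ_pos (#P).cast_nonneg (#C).cast_nonneg
          (Nat.cast_nonneg _) (le_add_of_nonneg_left d.cast_nonneg) hcard'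
    _ = c * (d + 1) * incidenceBound (k + 1) #P #C := (mul_assoc _ _ _).symm

end Incidences

/-- **Pach–Sharir theorem.** For all `k ≥ 2`, `s ≥ 1` and every degree bound `E`
there is a constant `c` (depending on `k`, `s`, and `E`) such that for every set
`P` of `m` points and every set `C` of `n` algebraic curves of degree at most `E`
in `ℝ²` with `k` degrees of freedom and multiplicity `s`,
`I(P,C) ≤ c (m^{k/(2k-1)} n^{(2k-2)/(2k-1)} + m + n)`. -/
theorem pach_sharir (k s E : ℕ) (hk : 2 ≤ k) (hs : 1 ≤ s) :
    ∃ c : ℝ, 0 < c ∧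
      ∀ (P : Finset (Fin 2 → ℝ)) (C : Finset (Set (Fin 2 → ℝ))),
        (∀ γ ∈ C, IsPlaneAlgCurve E γ) →
        HasDegreesOfFreedom C k s →
        (Incidences P C : ℝ) ≤
          c * ((P.card : ℝ) ^ ((k : ℝ) / (2 * (k : ℝ) - 1))
                  * (C.card : ℝ) ^ ((2 * (k : ℝ) - 2) / (2 * (k : ℝ) - 1))
                + (P.card : ℝ) + (C.card : ℝ)) := by
  obtain ⟨l, rfl⟩ : ∃ l, k = l + 1 := ⟨k - 1, by omega⟩
  obtain ⟨c, hc, harcs⟩ := exists_sum_card_arcs_le_incidenceBound l s (2 * E ^ 2 + E) E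
  refine ⟨c + 1 + (2 * E ^ 2 + E) * E, by positivity, fun P C hC hdof ↦ ?_⟩
  rw [← incidenceBound]
  choose! X 𝒜 hX hcard h𝒜 using fun γ hγ ↦ (hC γ hγ).exists_isArcDecomposition
  have hsplit : (Incidences P C : ℝ) ≤
      ∑ a ∈ C.biUnion 𝒜, (#{p ∈ P | p ∈ a.graph} : ℝ) + #P + #C * ((2 * E ^ 2 + E) * E) := by
    exact_mod_cast incidences_le_sum_arcs_add h𝒜 hX
      (fun γ hγ ↦ (hC γ hγ).verticalLine_subset_or)
      (fun γ₁ h₁ γ₂ h₂ hne ↦ (hdof.2 γ₁ h₁ γ₂ h₂ hne).1) P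
  obtain ⟨-, hP_le, hC_le⟩ := le_incidenceBound (l + 1) (#P).cast_nonneg (#C).cast_nonneg
  calc (Incidences P C : ℝ)
      ≤ c * incidenceBound (l + 1) #P #C + incidenceBound (l + 1) #P #C +
          incidenceBound (l + 1) #P #C * ((2 * E ^ 2 + E) * E) :=
        hsplit.trans (by gcongr; exact harcs hdof h𝒜 hX hcard P)
    _ = (c + 1 + (2 * E ^ 2 + E) * E) * incidenceBound (l + 1) #P #C := by ring
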